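/- arXiv:2307.07073 — 2 statements merged into one kernel-verified Lean document; each statement's English description precedes it below -/
import Mathlib

section
/- Let K be a d-dimensional simplicial complex, γ a unit-norm null-homologous (d-1)-cycle, n = min{n_{d-1}, n_d}, and T_max(K) the maximal cardinality of the torsion subgroup of any relative homology group H_{d-1}(L, L₀; ℤ) for subcomplexes L₀ ⊂ L ⊂ K. Then the effective resistance satisfies R_γ(K) = O(n² · T_max(K)²). -/
/-!
The constant is `C = 1`. The boundary matrix of `K` restricted to a column basis contains a
nonsingular `k × k` submatrix `B`, where `k` is the rank, so `k ≤ n` and a flow `g` supported on the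
chosen columns is determined by `B g = y`, with `y` a restriction of `γ`. By Cramer's rule the
coordinates of `g` are `(det B)⁻¹` times combinations of the entries of `y` with coefficients the
cofactors of `B`. As `B` is integral, `|det B| ≥ 1`, and Cauchy–Schwarz gives
`‖g‖² ≤ k² (max cofactor)²` (`sum_sq_le_of_cofactor_bound`).

It remains to bound the cofactors, which are minors of the boundary matrix up to sign. A nonsingular
square submatrix is the relative boundary matrix of a suitable pair `L₀ ⊆ L ⊆ K`, and its cokernel
is a finite group whose order is the absolute value of the determinant; this group is torsion in
`H_d(L, L₀; ℤ)`, so the minor is at most `T` (`natAbs_minor_le`).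
-/


open Matrix

/-- An abstract simplicial complex on vertex set `V`: a finite, downward-closed
family of nonempty finite subsets of `V`. -/
structure SComplex (V : Type) where
  faces : Finset (Finset V)
  down_closed : ∀ s ∈ faces, ∀ t ⊆ s, t.Nonempty → t ∈ faces

/-- The index type of `d`-dimensional simplices (i.e. `(d+1)`-element subsets) on `V`. -/
abbrev SimpIdx (V : Type) (d : ℕ) := {s : Finset V // s.card = d + 1}

variable {V : Type} [Fintype V] [LinearOrder V]

/-- The signed incidence coefficient of the boundary operator: for `τ ⊆ σ` of
codimension one it is `(-1)ⁱ` where `i` is the position of the removed vertex. -/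
def bsign (τ σ : Finset V) : ℤ :=
  if τ ⊆ σ ∧ τ.card + 1 = σ.card then
    (-1 : ℤ) ^ (σ.filter (fun w => ∃ v ∈ σ \ τ, w < v)).card
  else 0

/-- The global integral boundary matrix `∂_{d+1}` from `(d+1)`-dimensional to
`d`-dimensional simplices on the vertex set `V`. -/
def gbdryZ (V : Type) [Fintype V] [LinearOrder V] (d : ℕ) :
    Matrix (SimpIdx V d) (SimpIdx V (d + 1)) ℤ :=
  fun τ σ => bsign (τ : Finset V) (σ : Finset V)

/-- The global real boundary matrix. -/
noncomputable def gbdry (V : Type) [Fintype V] [LinearOrder V] (d : ℕ) :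
    Matrix (SimpIdx V d) (SimpIdx V (d + 1)) ℝ :=
  (gbdryZ V d).map (fun z => (z : ℝ))

/-- Diagonal 0/1 matrix indicating membership of simplices in the complex `K`. -/
noncomputable def SComplex.ind (K : SComplex V) (d : ℕ) :
    Matrix (SimpIdx V d) (SimpIdx V d) ℝ :=
  Matrix.diagonal fun σ => if (σ : Finset V) ∈ K.faces then (1 : ℝ) else 0

/-- The boundary matrix `∂_{d+1}[K]` of the complex `K` (rows and columns outside
`K` are zero). -/
noncomputable def SComplex.bdry (K : SComplex V) (d : ℕ) :
    Matrix (SimpIdx V d) (SimpIdx V (d + 1)) ℝ :=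
  K.ind d * gbdry V d * K.ind (d + 1)

/-- A chain is supported on the complex `K`. -/
def SComplex.supportedOn (K : SComplex V) {d : ℕ} (f : SimpIdx V d → ℝ) : Prop :=
  ∀ σ : SimpIdx V d, f σ ≠ 0 → (σ : Finset V) ∈ K.faces

/-- A `d`-dimensional chain is a cycle (its boundary vanishes; every `0`-chain is a cycle). -/
def IsCycle (V : Type) [Fintype V] [LinearOrder V] : (d : ℕ) → (SimpIdx V d → ℝ) → Prop
  | 0, _ => True
  | (d + 1), γ => gbdry V d *ᵥ γ = 0

/-- A `d`-dimensional cycle `γ` is null-homologous in `K` iff it is the boundary of a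
`(d+1)`-chain of `K` (a unit `γ`-flow). -/
def SComplex.NullHomologous (K : SComplex V) (d : ℕ) (γ : SimpIdx V d → ℝ) : Prop :=
  ∃ f : SimpIdx V (d + 1) → ℝ, K.supportedOn f ∧ gbdry V d *ᵥ f = γ

/-- The weighted effective resistance of `γ` in `K`: the infimum of flow energies
`∑ f(σ)²/w(σ)` over unit `γ`-flows `f` in `K`. -/
noncomputable def SComplex.effResW (K : SComplex V) (d : ℕ)
    (w : SimpIdx V (d + 1) → ℝ) (γ : SimpIdx V d → ℝ) : ℝ :=
  sInf {E : ℝ | ∃ f : SimpIdx V (d + 1) → ℝ, K.supportedOn f ∧ gbdry V d *ᵥ f = γ ∧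
    E = ∑ σ : SimpIdx V (d + 1), f σ ^ 2 / w σ}

/-- Unweighted effective resistance. -/
noncomputable def SComplex.effRes (K : SComplex V) (d : ℕ) (γ : SimpIdx V d → ℝ) : ℝ :=
  K.effResW d (fun _ => 1) γ

/-- The weighted up-Laplacian `L^{up,W} = ∂ W ∂ᵀ` of `K` acting on `d`-chains. -/
noncomputable def SComplex.upLapW (K : SComplex V) (d : ℕ) (w : SimpIdx V (d + 1) → ℝ) :
    Matrix (SimpIdx V d) (SimpIdx V d) ℝ :=
  K.bdry d * Matrix.diagonal w * (K.bdry d)ᵀ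

/-- The (unweighted) up-Laplacian `L^{up} = ∂ ∂ᵀ` of `K` acting on `d`-chains. -/
noncomputable def SComplex.upLap (K : SComplex V) (d : ℕ) :
    Matrix (SimpIdx V d) (SimpIdx V d) ℝ :=
  K.bdry d * (K.bdry d)ᵀ

/-- The down-Laplacian `L^{down} = ∂ᵀ ∂` of `K` acting on `d`-chains (zero on `0`-chains). -/
noncomputable def SComplex.downLap (K : SComplex V) :
    (d : ℕ) → Matrix (SimpIdx V d) (SimpIdx V d) ℝ
  | 0 => 0
  | (d + 1) => (K.bdry d)ᵀ * K.bdry d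

/-- The combinatorial Laplacian `L = L^{up} + L^{down}`. -/
noncomputable def SComplex.combLap (K : SComplex V) (d : ℕ) :
    Matrix (SimpIdx V d) (SimpIdx V d) ℝ :=
  K.upLap d + K.downLap d

/-- `X` is the Moore–Penrose pseudoinverse of `A` (the four Penrose conditions). -/
def IsMoorePenrose {m n : Type} [Fintype m] [Fintype n]
    (A : Matrix m n ℝ) (X : Matrix n m ℝ) : Prop :=
  A * X * A = A ∧ X * A * X = X ∧ (A * X)ᵀ = A * X ∧ (X * A)ᵀ = X * A

/-- `μ` is an eigenvalue of the real matrix `M`. -/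
def IsEigen {n : Type} [Fintype n] (M : Matrix n n ℝ) (μ : ℝ) : Prop :=
  ∃ x : n → ℝ, x ≠ 0 ∧ M *ᵥ x = μ • x

/-- The spectral gap of `M`: the infimum of its nonzero (real) eigenvalues. -/
noncomputable def specGap {n : Type} [Fintype n] (M : Matrix n n ℝ) : ℝ :=
  sInf {μ : ℝ | μ ≠ 0 ∧ IsEigen M μ}

/-- The number of `d`-dimensional simplices of `K`. -/
def nface (K : SComplex V) (d : ℕ) : ℕ :=
  (K.faces.filter fun s => s.card = d + 1).card

/-- The weighted effective capacitance of `γ` for `L ⊆ K`: the infimum of potential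
energies `‖δ[K] p‖²_W` over unit `γ`-potentials `p` of `L`. -/
noncomputable def SComplex.effCapW (K L : SComplex V) (d : ℕ)
    (w : SimpIdx V (d + 1) → ℝ) (γ : SimpIdx V d → ℝ) : ℝ :=
  sInf {E : ℝ | ∃ p : SimpIdx V d → ℝ, L.supportedOn p ∧ (L.bdry d)ᵀ *ᵥ p = 0 ∧
    p ⬝ᵥ γ = 1 ∧ E = ∑ σ : SimpIdx V (d + 1), ((K.bdry d)ᵀ *ᵥ p) σ ^ 2 * w σ}

/-- Unweighted effective capacitance. -/
noncomputable def SComplex.effCap (K L : SComplex V) (d : ℕ) (γ : SimpIdx V d → ℝ) : ℝ :=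
  K.effCapW L d (fun _ => 1) γ

/-- The relative integral boundary matrix `∂[L, L₀]`: entries are kept only for
simplices of `L` not in `L₀`. -/
def relBdryZ (L L₀ : SComplex V) (d : ℕ) :
    Matrix (SimpIdx V d) (SimpIdx V (d + 1)) ℤ :=
  fun τ σ => if (τ : Finset V) ∈ L.faces ∧ (τ : Finset V) ∉ L₀.faces ∧
      (σ : Finset V) ∈ L.faces ∧ (σ : Finset V) ∉ L₀.faces then
    bsign (τ : Finset V) (σ : Finset V) else 0

/-- Kernel of the relative boundary map out of relative `d`-chains. -/
noncomputable def relKer (L L₀ : SComplex V) : (d : ℕ) → Submodule ℤ (SimpIdx V d → ℤ)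
  | 0 => ⊤
  | (d + 1) => LinearMap.ker (Matrix.toLin' (relBdryZ L L₀ d))

/-- The cardinality of the torsion subgroup of the relative homology group
`H_d(L, L₀; ℤ)`. -/
noncomputable def relTorsionCard (L L₀ : SComplex V) (d : ℕ) : ℕ :=
  Nat.card (Submodule.torsion ℤ
    (↥(relKer L L₀ d) ⧸ Submodule.comap (relKer L L₀ d).subtype
      (LinearMap.range (Matrix.toLin' (relBdryZ L L₀ d)))))

/-- If `φ` induces an embedding of the cokernel `ℤᵏ / B ℤᵏ` of a nonsingular matrix into `P ⧸ N`,
then this cokernel, being finite of order `|det B|`, lands in the torsion of `P ⧸ N`. -/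
theorem natAbs_det_le_card_torsion {k : ℕ} {P : Type*} [AddCommGroup P] [Module.Finite ℤ P]
    (N : Submodule ℤ P) (φ : (Fin k → ℤ) →ₗ[ℤ] P) (B : Matrix (Fin k) (Fin k) ℤ)
    (hB : B.det ≠ 0) (hφ : ∀ v, φ v ∈ N ↔ v ∈ LinearMap.range (Matrix.toLin' B)) :
    B.det.natAbs ≤ Nat.card (Submodule.torsion ℤ (P ⧸ N)) := by
  have hinj : Function.Injective (Matrix.toLin' B) := by
    rw [injective_iff_map_eq_zero]
    intro v hv
    exact Matrix.eq_zero_of_mulVec_eq_zero hB (by simpa using hv)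
  have hcard : B.det.natAbs =
      Nat.card ((Fin k → ℤ) ⧸ LinearMap.range (Matrix.toLin' B)) := by
    rw [← Submodule.natAbs_det_equiv _ (LinearEquiv.ofInjective _ hinj), ← LinearMap.det_toLin']
    congr 2
  have htor : Module.IsTorsion ℤ (Submodule.torsion ℤ (P ⧸ N)) := Submodule.torsion_isTorsion
  have : Finite (Submodule.torsion ℤ (P ⧸ N)) := Module.finite_of_fg_torsion _ htor
  -- The class of `φ v` is killed by `det B`, since `det B • v = B (adj B v)`.
  have hmem : ∀ v, N.mkQ (φ v) ∈ Submodule.torsion ℤ (P ⧸ N) := by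
    intro v
    rw [Submodule.mem_torsion_iff]
    refine ⟨⟨B.det, mem_nonZeroDivisors_of_ne_zero hB⟩, ?_⟩
    change B.det • N.mkQ (φ v) = 0
    rw [← map_smul, ← map_smul, Submodule.mkQ_apply, Submodule.Quotient.mk_eq_zero, hφ]
    refine ⟨B.adjugate *ᵥ v, ?_⟩
    rw [Matrix.toLin'_apply, Matrix.mulVec_mulVec, Matrix.mul_adjugate, Matrix.smul_mulVec,
      Matrix.one_mulVec]
  let ψ := LinearMap.codRestrict (Submodule.torsion ℤ (P ⧸ N)) (N.mkQ ∘ₗ φ) hmem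
  have hker : LinearMap.ker ψ = LinearMap.range (Matrix.toLin' B) := by
    ext v
    rw [LinearMap.ker_codRestrict, LinearMap.mem_ker, LinearMap.comp_apply, Submodule.mkQ_apply,
      Submodule.Quotient.mk_eq_zero, hφ]
  rw [hcard, ← hker]
  exact Nat.card_le_card_of_injective _
    (LinearMap.ker_eq_bot.mp (Submodule.ker_liftQ_eq_bot _ ψ le_rfl le_rfl))

/-- Every minor of the boundary matrix of `K` is bounded by the relative torsion. For rows `r` and
columns `c`, take `L` to be the `d`-skeleton of `K` together with the simplices `c j`, and `L₀` to
be the `d`-skeleton without the `d`-simplices `r i`. The relative boundary matrix of `(L, L₀)` is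
then exactly the submatrix, and every relative `d`-chain is a cycle since `L₀` contains all
`(d-1)`-simplices.

In `relTorsionCard` chains are functions on all `d`-simplices of `V`, not only on those of
`L \ L₀`, so the quotient has an extra free summand, which does not affect the torsion. -/
theorem natAbs_minor_le (K : SComplex V) (d T : ℕ)
    (hT : ∀ L L₀ : SComplex V, L.faces ⊆ K.faces → L₀.faces ⊆ L.faces →
      relTorsionCard L L₀ d ≤ T)
    {k : ℕ} (r : Fin k → SimpIdx V d) (c : Fin k → SimpIdx V (d + 1))
    (hr : Function.Injective r) (hc : Function.Injective c)
    (hrK : ∀ i, (r i : Finset V) ∈ K.faces) (hcK : ∀ i, (c i : Finset V) ∈ K.faces) :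
    ((gbdryZ V d).submatrix r c).det.natAbs ≤ T := by
  classical
  by_cases hdet : ((gbdryZ V d).submatrix r c).det = 0
  · simp [hdet]
  let L : SComplex V :=
    { faces := K.faces.filter fun s => s.card ≤ d + 1 ∨ ∃ j, (c j : Finset V) = s
      down_closed := by
        intro s hs t hts ht
        rw [Finset.mem_filter] at hs ⊢
        refine ⟨K.down_closed s hs.1 t hts ht, ?_⟩
        have h1 := Finset.card_le_card hts
        rcases hs.2 with h | ⟨j, hj⟩
        · left; omega
        · by_cases h : t = s
          · right; exact ⟨j, by rw [h, hj]⟩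
          · left
            have h2 := Finset.card_lt_card (Finset.ssubset_iff_subset_ne.mpr ⟨hts, h⟩)
            have h3 := (c j).2
            rw [hj] at h3
            omega }
  let L₀ : SComplex V :=
    { faces := K.faces.filter fun s => s.card ≤ d ∨ (s.card = d + 1 ∧ ∀ i, (r i : Finset V) ≠ s)
      down_closed := by
        intro s hs t hts ht
        rw [Finset.mem_filter] at hs ⊢
        refine ⟨K.down_closed s hs.1 t hts ht, ?_⟩
        have h1 := Finset.card_le_card hts
        rcases hs.2 with h | ⟨h, hne⟩
        · left; omega
        · by_cases h' : t = s
          · right; rw [h']; exact ⟨h, hne⟩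
          · left
            have h2 := Finset.card_lt_card (Finset.ssubset_iff_subset_ne.mpr ⟨hts, h'⟩)
            omega }
  have hL : L.faces ⊆ K.faces := Finset.filter_subset _ _
  have hL₀ : L₀.faces ⊆ L.faces := by
    intro s hs
    simp only [L, L₀, Finset.mem_filter] at hs ⊢
    refine ⟨hs.1, Or.inl ?_⟩
    rcases hs.2 with h | h <;> omega
  have hrow : ∀ τ : SimpIdx V d,
      ((τ : Finset V) ∈ L.faces ∧ (τ : Finset V) ∉ L₀.faces) ↔ ∃ i, r i = τ := by
    intro τ
    have h1 := τ.2
    constructor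
    · rintro ⟨h2, h3⟩
      by_contra! h4
      apply h3
      simp only [L, L₀, Finset.mem_filter] at h2 ⊢
      exact ⟨h2.1, Or.inr ⟨h1, fun i hi => h4 i (Subtype.ext hi)⟩⟩
    · rintro ⟨i, rfl⟩
      simp only [L, L₀, Finset.mem_filter]
      refine ⟨⟨hrK i, Or.inl h1.le⟩, ?_⟩
      rintro ⟨-, h | h⟩
      · omega
      · exact h.2 i rfl
  have hcol : ∀ σ : SimpIdx V (d + 1),
      ((σ : Finset V) ∈ L.faces ∧ (σ : Finset V) ∉ L₀.faces) ↔ ∃ j, c j = σ := by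
    intro σ
    have h1 := σ.2
    constructor
    · rintro ⟨h2, -⟩
      simp only [L, Finset.mem_filter] at h2
      rcases h2.2 with h | ⟨j, hj⟩
      · omega
      · exact ⟨j, Subtype.ext hj⟩
    · rintro ⟨j, rfl⟩
      simp only [L, L₀, Finset.mem_filter]
      refine ⟨⟨hcK j, Or.inr ⟨j, rfl⟩⟩, ?_⟩
      rintro ⟨-, h | h⟩ <;> omega
  have hM : ∀ τ σ, relBdryZ L L₀ d τ σ =
      if (∃ i, r i = τ) ∧ (∃ j, c j = σ) then gbdryZ V d τ σ else 0 := by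
    intro τ σ
    rw [relBdryZ, gbdryZ]
    refine if_congr ?_ rfl rfl
    rw [← hrow, ← hcol, and_assoc]
  have hker : relKer L L₀ d = ⊤ := by
    cases d with
    | zero => rfl
    | succ e =>
      have h0 : relBdryZ L L₀ e = 0 := by
        ext τ σ
        have h1 := τ.2
        simp only [relBdryZ, Matrix.zero_apply]
        rw [if_neg]
        rintro ⟨h2, h3, -⟩
        exact h3 (Finset.mem_filter.mpr ⟨hL h2, Or.inl h1.le⟩)
      simp [relKer, h0]
  -- Extension by zero along `r`, from `ℤᵏ` to all integral `d`-chains.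
  let ext : (Fin k → ℤ) →ₗ[ℤ] (SimpIdx V d → ℤ) := Function.ExtendByZero.linearMap ℤ r
  have hext : ∀ v i, ext v (r i) = v i := fun v i => hr.extend_apply _ _ _
  have hext0 : ∀ v τ, (¬ ∃ i, r i = τ) → ext v τ = 0 := fun v τ h =>
    Function.extend_apply' _ _ _ h
  have hMv : ∀ (x : SimpIdx V (d + 1) → ℤ),
      relBdryZ L L₀ d *ᵥ x = ext ((gbdryZ V d).submatrix r c *ᵥ (x ∘ c)) := by
    intro x
    funext τ
    by_cases hτ : ∃ i, r i = τ
    · obtain ⟨i, rfl⟩ := hτ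
      rw [hext, Matrix.mulVec, Matrix.mulVec, dotProduct, dotProduct]
      refine (Fintype.sum_of_injective c hc _ _ ?_ ?_).symm
      · intro σ hσ
        rw [hM, if_neg (fun h => hσ h.2), zero_mul]
      · intro j
        rw [hM, if_pos ⟨⟨i, rfl⟩, j, rfl⟩]
        rfl
    · rw [hext0 _ _ hτ, Matrix.mulVec, dotProduct]
      refine Finset.sum_eq_zero fun σ _ => ?_
      rw [hM, if_neg (fun h => hτ h.1), zero_mul]
  refine le_trans ?_ (hT L L₀ hL hL₀)
  refine natAbs_det_le_card_torsion _
    (LinearMap.codRestrict (relKer L L₀ d) ext fun v => by rw [hker]; trivial) _ hdet ?_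
  intro v
  rw [Submodule.mem_comap]
  constructor
  · rintro ⟨x, hx⟩
    refine ⟨x ∘ c, ?_⟩
    rw [Matrix.toLin'_apply] at hx ⊢
    rw [hMv] at hx
    funext i
    have := congrFun hx (r i)
    rw [hext] at this
    rw [this]
    exact hext v i
  · rintro ⟨y, hy⟩
    refine ⟨Function.extend c y 0, ?_⟩
    rw [Matrix.toLin'_apply] at hy ⊢
    rw [hMv, Function.extend_comp hc, hy]
    rfl

/-- A vector in the image of `A` is already in the image of a column basis of `A`, which can be
chosen among the columns in the support set `S` and has a nonsingular maximal minor. -/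
theorem exists_submatrix_of_mem_range {m n : Type} [Fintype m] [Fintype n]
    (A : Matrix m n ℝ) (S : Set n) (f : n → ℝ) (hf : ∀ j, f j ≠ 0 → j ∈ S) :
    ∃ (k : ℕ) (r : Fin k → m) (c : Fin k → n) (g : Fin k → ℝ),
      Function.Injective r ∧ Function.Injective c ∧ (∀ j, c j ∈ S) ∧
      (A.submatrix r c).det ≠ 0 ∧ A.submatrix id c *ᵥ g = A *ᵥ f := by
  classical
  obtain ⟨κ, a, ha, hspan, hli⟩ := exists_linearIndependent' ℝ (fun j : S => A.col j)
  have : Finite κ := Finite.of_injective a ha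
  have : Fintype κ := Fintype.ofFinite κ
  have hmem : A *ᵥ f ∈ Submodule.span ℝ (Set.range ((fun j : S => A.col j) ∘ a)) := by
    rw [hspan]
    have h1 : A *ᵥ f = ∑ j, f j • A.col j := by
      funext i
      simp [Matrix.mulVec, dotProduct, mul_comm]
    rw [h1]
    refine Submodule.sum_mem _ fun j _ => ?_
    by_cases hj : f j = 0
    · simp [hj]
    · exact Submodule.smul_mem _ _ (Submodule.subset_span ⟨⟨j, hf j hj⟩, rfl⟩)
  obtain ⟨g, hg⟩ := (Submodule.mem_span_range_iff_exists_fun ℝ).mp hmem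
  let b := (Fintype.equivFin κ).symm
  let c : Fin (Fintype.card κ) → n := fun i => (a (b i) : n)
  have hc : Function.Injective c := Subtype.val_injective.comp (ha.comp b.injective)
  -- Row rank equals column rank, so the chosen columns have as many independent rows.
  have hcli : LinearIndependent ℝ (A.submatrix id c)ᵀ.row := hli.comp b b.injective
  have hrank : (A.submatrix id c).rank = Fintype.card κ := by
    rw [← Matrix.rank_transpose, hcli.rank_matrix, Fintype.card_fin]
  obtain ⟨κ', a', ha', hspan', hli'⟩ := exists_linearIndependent' ℝ (A.submatrix id c).row
  have : Finite κ' := Finite.of_injective a' ha'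
  have : Fintype κ' := Fintype.ofFinite κ'
  have hcard : Fintype.card κ' = Fintype.card κ := by
    rw [← hrank, Matrix.rank_eq_finrank_span_row, ← hspan', finrank_span_eq_card hli']
  let b' := (Fintype.equivFinOfCardEq hcard).symm
  refine ⟨_, a' ∘ b', c, g ∘ b, ha'.comp b'.injective, hc, fun j => (a (b j)).2, ?_, ?_⟩
  · have h2 : LinearIndependent ℝ (A.submatrix (a' ∘ b') c).row := hli'.comp b' b'.injective
    exact ((Matrix.isUnit_iff_isUnit_det _).mp
      (Matrix.linearIndependent_rows_iff_isUnit.mp h2)).ne_zero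
  · rw [← hg, ← b.sum_comp]
    funext i
    simp [Matrix.mulVec, dotProduct, mul_comm, c]

/-- Cramer's rule with integrality: `g = (det B)⁻¹ adj(B) y` with `|det B| ≥ 1`, so bounds on
the cofactors of `B` bound the solution. -/
theorem sum_sq_le_of_cofactor_bound {k : ℕ} (B : Matrix (Fin k) (Fin k) ℤ) (hB : B.det ≠ 0)
    (T : ℕ) (hadj : ∀ i j, |B.adjugate i j| ≤ T) (g y : Fin k → ℝ)
    (hg : B.map (fun z => (z : ℝ)) *ᵥ g = y) (hy : ∑ i, y i ^ 2 ≤ 1) :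
    ∑ i, g i ^ 2 ≤ (k : ℝ) ^ 2 * (T : ℝ) ^ 2 := by
  have hcramer : ∀ i, (B.det : ℝ) * g i = ∑ j, (B.adjugate i j : ℝ) * y j := by
    intro i
    have h1 : B.adjugate.map (fun z => (z : ℝ)) *ᵥ y = (B.det : ℝ) • g := by
      have h2 : B.adjugate.map (fun z => (z : ℝ)) = (B.map (fun z => (z : ℝ))).adjugate :=
        RingHom.map_adjugate (Int.castRingHom ℝ) B
      rw [h2, ← hg, Matrix.mulVec_mulVec, Matrix.adjugate_mul, Matrix.smul_mulVec,
        Matrix.one_mulVec, Int.cast_det]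
    have := congrFun h1 i
    simpa [Matrix.mulVec, dotProduct] using this.symm
  have hdet : (1 : ℝ) ≤ (B.det : ℝ) ^ 2 := by
    have : (1 : ℤ) ≤ B.det ^ 2 := Int.add_one_le_iff.mpr (sq_pos_of_ne_zero hB)
    exact_mod_cast this
  have hone : ∀ i, g i ^ 2 ≤ k * (T : ℝ) ^ 2 := by
    intro i
    calc g i ^ 2 ≤ (B.det : ℝ) ^ 2 * g i ^ 2 := le_mul_of_one_le_left (sq_nonneg _) hdet
      _ = (∑ j, (B.adjugate i j : ℝ) * y j) ^ 2 := by rw [← hcramer, mul_pow]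
      _ ≤ (∑ j, (B.adjugate i j : ℝ) ^ 2) * ∑ j, y j ^ 2 := Finset.sum_mul_sq_le_sq_mul_sq _ _ _
      _ ≤ (∑ j, (B.adjugate i j : ℝ) ^ 2) * 1 :=
        mul_le_mul_of_nonneg_left hy (Finset.sum_nonneg fun j _ => sq_nonneg _)
      _ ≤ k * (T : ℝ) ^ 2 := by
        rw [mul_one]
        calc ∑ j, (B.adjugate i j : ℝ) ^ 2 ≤ ∑ _j : Fin k, (T : ℝ) ^ 2 := by
              refine Finset.sum_le_sum fun j _ => ?_
              have h3 : |(B.adjugate i j : ℝ)| ≤ T := by exact_mod_cast hadj i j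
              exact sq_le_sq.mpr (h3.trans (le_abs_self _))
          _ = k * (T : ℝ) ^ 2 := by simp
  calc ∑ i, g i ^ 2 ≤ ∑ _i : Fin k, k * (T : ℝ) ^ 2 := Finset.sum_le_sum fun i _ => hone i
    _ = (k : ℝ) ^ 2 * (T : ℝ) ^ 2 := by simp; ring

theorem card_le_nface {W : Type} (K : SComplex W) (d : ℕ) {k : ℕ} (r : Fin k → SimpIdx W d)
    (hr : Function.Injective r) (hrK : ∀ i, (r i : Finset W) ∈ K.faces) : k ≤ nface K d := by
  have h := Finset.card_le_card_of_injOn (s := (Finset.univ : Finset (Fin k)))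
    (t := K.faces.filter fun s => s.card = d + 1) (fun i => (r i : Finset W))
    (fun i _ => by simpa using ⟨hrK i, (r i).2⟩)
    (fun i _ j _ hij => hr (Subtype.ext hij))
  simpa [nface] using h


/-- **Upper bound on effective resistance by relative torsion.** There is a constant
`C > 0` such that for every `(d+1)`-dimensional simplicial complex `K` and every
unit-norm null-homologous `d`-cycle `γ` in `K`, if the torsion subgroup of every
relative homology group `H_d(L, L₀; ℤ)` of subcomplexes `L₀ ⊆ L ⊆ K` has
cardinality at most `T`, then `R_γ(K) ≤ C · n² · T²` where
`n = min{n_d, n_{d+1}}`. -/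
theorem effective_resistance_le_torsion_bound :
    ∃ C : ℝ, 0 < C ∧
      ∀ (V : Type) [Fintype V] [LinearOrder V] (K : SComplex V) (d : ℕ),
      (∀ s ∈ K.faces, s.card ≤ d + 2) →
      ∀ γ : SimpIdx V d → ℝ, IsCycle V d γ → K.supportedOn γ → γ ⬝ᵥ γ = 1 →
      K.NullHomologous d γ →
      ∀ T : ℕ, (∀ L L₀ : SComplex V, L.faces ⊆ K.faces → L₀.faces ⊆ L.faces →
        relTorsionCard L L₀ d ≤ T) →
      K.effRes d γ ≤ C * ((min (nface K d) (nface K (d + 1)) : ℕ) : ℝ) ^ 2 * (T : ℝ) ^ 2 := by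
  refine ⟨1, one_pos, ?_⟩
  intro V _ _ K d _ γ _ _ hnorm hnull T hT
  obtain ⟨f₀, hf₀, hbd⟩ := hnull
  obtain ⟨k, r, c, g, hr, hc, hcK, hdetR, hg⟩ :=
    exists_submatrix_of_mem_range (gbdry V d) {σ | (σ : Finset V) ∈ K.faces} f₀ hf₀
  rw [hbd] at hg
  set B : Matrix (Fin k) (Fin k) ℤ := (gbdryZ V d).submatrix r c with hBdef
  have hBR : (gbdry V d).submatrix r c = B.map (fun z => (z : ℝ)) := rfl
  have hdet : B.det ≠ 0 := by
    intro h
    apply hdetR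
    rw [hBR, ← Int.cast_det, h, Int.cast_zero]
  -- A row of a nonsingular minor is nonzero, so its simplex is a facet of a simplex of `K`.
  have hrK : ∀ i, (r i : Finset V) ∈ K.faces := by
    intro i
    by_contra hi
    apply hdet
    refine Matrix.det_eq_zero_of_row_eq_zero i fun j => ?_
    change bsign (r i : Finset V) (c j : Finset V) = 0
    refine if_neg fun h => hi (K.down_closed _ (hcK j) _ h.1 ?_)
    rw [← Finset.card_pos, (r i).2]
    omega
  have hadj : ∀ i j, |B.adjugate i j| ≤ T := by
    clear hBR hdetR hdet hg
    intro i j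
    cases k with
    | zero => exact i.elim0
    | succ m =>
      rw [Matrix.adjugate_fin_succ_eq_det_submatrix, abs_mul, abs_pow, abs_neg, abs_one, one_pow,
        one_mul, Int.abs_eq_natAbs, Nat.cast_le, hBdef, Matrix.submatrix_submatrix]
      exact natAbs_minor_le K d T hT _ _ (hr.comp Fin.succAbove_right_injective)
        (hc.comp Fin.succAbove_right_injective) (fun _ => hrK _) (fun _ => hcK _)
  have hgB : B.map (fun z => (z : ℝ)) *ᵥ g = γ ∘ r := by
    funext i
    exact congrFun hg (r i)
  have hy : ∑ i, (γ ∘ r) i ^ 2 ≤ 1 := by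
    rw [← hnorm, dotProduct]
    calc ∑ i, (γ ∘ r) i ^ 2 = ∑ τ ∈ Finset.univ.map ⟨r, hr⟩, γ τ ^ 2 := by simp
      _ ≤ ∑ τ, γ τ ^ 2 :=
        Finset.sum_le_univ_sum_of_nonneg fun τ => sq_nonneg _
      _ = ∑ τ, γ τ * γ τ := by simp [sq]
  have hsum := sum_sq_le_of_cofactor_bound B hdet T hadj g _ hgB hy
  -- The flow: `g` on the chosen columns, zero elsewhere.
  have hext0 : ∀ σ, σ ∉ Set.range c → Function.extend c g 0 σ = 0 := fun σ h =>
    Function.extend_apply' _ _ _ h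
  have hle : K.effRes d γ ≤ ∑ i, g i ^ 2 := by
    refine csInf_le ⟨0, ?_⟩ ⟨Function.extend c g 0, ?_, ?_, ?_⟩
    · rintro E ⟨f, -, -, rfl⟩
      exact Finset.sum_nonneg fun σ _ => by positivity
    · intro σ hσ
      by_contra h
      refine hσ (hext0 σ ?_)
      rintro ⟨j, rfl⟩
      exact h (hcK j)
    · rw [← hg]
      funext τ
      refine (Fintype.sum_of_injective c hc _ _ ?_ ?_).symm
      · intro σ hσ
        simp only [hext0 σ hσ, mul_zero]
      · intro j
        rw [hc.extend_apply]
        rfl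
    · refine Fintype.sum_of_injective c hc _ _ ?_ ?_
      · intro σ hσ
        simp [hext0 σ hσ]
      · intro j
        simp [hc.extend_apply]
  have hk : (k : ℝ) ≤ ((min (nface K d) (nface K (d + 1)) : ℕ) : ℝ) := by
    exact_mod_cast le_min (card_le_nface K d r hr hrK) (card_le_nface K (d + 1) c hc hcK)
  calc K.effRes d γ ≤ (k : ℝ) ^ 2 * (T : ℝ) ^ 2 := hle.trans hsum
    _ ≤ _ := by rw [one_mul]; gcongr
end

section
/- Let d,n ≥ 1. There exists a d-dimensional simplicial complex B_d^n with Θ((d+1)³ n) d-simplices containing a d-chain y_n such that ‖y_n‖² = Ω(d^{2n}(d+1)) and ‖∂ y_n‖² = d+1; moreover ker ∂_d[B_d^n] = 0, so the unit cycle γ = ∂y_n/‖∂y_n‖ has effective resistance R_γ(B_d^n) = Θ(d^{2n}). -/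
/-!
Write `D = d + 1`.

**The complex.** For `d ≥ 1` the complex is obtained from a two-dimensional complex `X` whose
vertices lie on levels `0, …, n + 1`. Each level `i ≤ n` has a cycle on `N = 3D` vertices
`0, …, N - 1` and an apex `N`, and `γᵢ` denotes the oriented boundary `N - 1 → 0 → N → N - 1` of
a triangle. For `i < n` a block consists of a fan, which cones all edges of the cycle except
`N - 1 → 0` to the apex, and of a strip of `2N` triangles, which joins the cycle to the
three-vertex cycle `γᵢ₊₁` and wraps `D` times around it. The fan turns the cycle into `γᵢ`, so
the boundary of a block is `γᵢ - D γᵢ₊₁` (`Cell.block`). A single triangle caps off `γₙ`. Weighting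
block `i` by `Dⁱ` and the cap by `Dⁿ`, the boundaries telescope to `γ₀` (`Cell.sum_bdry`), while
the squared norm of this chain lies between `D²ⁿ` and `10 D²ⁿ` (`Cell.sum_coeff`). Further
triangles, pendant at a common edge and of coefficient `0`, only bring the number of triangles to
the order `D² n`.

**Raising the dimension.** Joining `X` with the boundary of a simplex `A` on `d` vertices gives a
complex of dimension `d + 1` with `d` top simplices for each triangle of `X`. As the boundary of
`A` is a cycle, the boundary of a join with it is the join of the boundary (`bdJoin_eq`). So the
chain of `X` yields a chain whose squared norm, and that of its boundary, are both multiplied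
by `d` (`core_join`).

**Triviality of the kernel.** Every top simplex `t` has a ridge, called free, such that all other
top simplices containing it have smaller rank (`Cell.rank_lt`). By induction on the rank, a chain
with zero boundary has coefficient zero at every `t`. Hence a flow with given boundary is unique
and the effective resistance is its energy. For a unit cycle proportional to the boundary of `y`,
this is the squared norm of `y` divided by that of its boundary, and `y` can be scaled to make the
latter `d + 2` (`core`).

For `d = 0` the powers of `D` are all `1`, and a star with `n` edges has the required properties
(`graph_case`).
-/

open Matrix

variable {V : Type} [Fintype V] [LinearOrder V]

/-! ### Complexes with free ridges -/

/-- The incidence number `bsign` over a linear order that need not be finite. -/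
def inc {W : Type} [LinearOrder W] (τ σ : Finset W) : ℤ :=
  if τ ⊆ σ ∧ τ.card + 1 = σ.card then
    (-1 : ℤ) ^ (σ.filter (fun w => ∃ v ∈ σ \ τ, w < v)).card
  else 0

/-- Incidence numbers are invariant under relabelling the vertices monotonically. -/
theorem bsign_map {W : Type} [LinearOrder W] {m : ℕ} (e : Fin m ↪o W) (τ σ : Finset (Fin m)) :
    bsign τ σ = inc (τ.map e.toEmbedding) (σ.map e.toEmbedding) := by
  unfold bsign inc
  simp only [Finset.map_subset_map, Finset.card_map, Finset.filter_map, ← Finset.map_sdiff]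
  congr 4
  ext w
  simp

theorem sdiff_erase_self' {W : Type} [DecidableEq W] {σ : Finset W} {x : W} (hx : x ∈ σ) :
    σ \ σ.erase x = {x} := by
  ext z
  simp only [Finset.mem_sdiff, Finset.mem_erase, Finset.mem_singleton]
  grind

/-- The boundary of a simplex is the alternating sum of its facets. -/
theorem inc_eq_sum {W : Type} [LinearOrder W] (ρ σ : Finset W) :
    (inc ρ σ : ℝ) = ∑ x ∈ σ, (-1 : ℝ) ^ (σ.filter (· < x)).card *
      (if σ.erase x = ρ then 1 else 0) := by
  by_cases h : ρ ⊆ σ ∧ ρ.card + 1 = σ.card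
  · have h1 : (σ \ ρ).card = 1 := by
      rw [Finset.card_sdiff_of_subset h.1]; omega
    obtain ⟨x, hx⟩ := Finset.card_eq_one.1 h1
    have hxm : x ∈ σ \ ρ := by rw [hx]; simp
    have hρ : σ.erase x = ρ := by
      rw [← Finset.sdiff_singleton_eq_erase, ← hx, Finset.sdiff_sdiff_eq_self h.1]
    rw [Finset.sum_eq_single_of_mem x (Finset.mem_sdiff.1 hxm).1]
    · rw [inc, if_pos h, hx, if_pos hρ]
      simp
    · intro z hz hzx
      rw [if_neg, mul_zero]
      intro hzρ
      have : σ \ ρ = {z} := by rw [← hzρ, sdiff_erase_self' hz]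
      rw [hx, Finset.singleton_inj] at this
      exact hzx this.symm
  · rw [inc, if_neg h, Finset.sum_eq_zero]
    · simp
    · intro x hx
      rw [if_neg, mul_zero]
      rintro rfl
      exact h ⟨Finset.erase_subset _ _, Finset.card_erase_add_one hx⟩

theorem inc_ne_zero {W : Type} [LinearOrder W] {τ σ : Finset W} (h : τ ⊆ σ)
    (hc : τ.card + 1 = σ.card) : inc τ σ ≠ 0 := by
  rw [inc, if_pos ⟨h, hc⟩]
  exact pow_ne_zero _ (by norm_num)

theorem subset_of_inc_ne_zero {W : Type} [LinearOrder W] {τ σ : Finset W} (h : inc τ σ ≠ 0) :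
    τ ⊆ σ := by
  by_contra hn
  exact h (by rw [inc, if_neg (fun h' => hn h'.1)])

/-- The trace on `Fin m` of a finite set, along an enumeration `e` of part of `W`. -/
def pull {W : Type} [LinearOrder W] {m : ℕ} (e : Fin m ↪o W) (σ : Finset W) : Finset (Fin m) :=
  Finset.univ.filter (fun x => e x ∈ σ)

theorem map_pull {W : Type} [LinearOrder W] {m : ℕ} (e : Fin m ↪o W) {σ : Finset W}
    (h : ∀ x ∈ σ, ∃ z, e z = x) : (pull e σ).map e.toEmbedding = σ := by
  ext x
  simp only [pull, Finset.mem_map, Finset.mem_filter, Finset.mem_univ, true_and]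
  constructor
  · rintro ⟨z, hz, rfl⟩; exact hz
  · intro hx
    obtain ⟨z, rfl⟩ := h x hx
    exact ⟨z, hx, rfl⟩

/-- Summing `g` against the indicator of the simplex `s` gives `g s`, if the vertices of `s` are
enumerated by `e`. -/
theorem sum_delta {W : Type} [LinearOrder W] {m k : ℕ} (e : Fin m ↪o W) {s : Finset W}
    (h : ∀ x ∈ s, ∃ z, e z = x) (hc : s.card = k + 1) (g : Finset W → ℝ) :
    ∑ σ : SimpIdx (Fin m) k, g (σ.1.map e.toEmbedding) *
      (if s = σ.1.map e.toEmbedding then 1 else 0) = g s := by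
  have hm := map_pull e h
  have hc' : (pull e s).card = k + 1 := by rw [← hc, ← hm, Finset.card_map, hm]
  rw [Finset.sum_eq_single (⟨pull e s, hc'⟩ : SimpIdx (Fin m) k)]
  · simp [hm]
  · intro σ _ hσ
    rw [if_neg, mul_zero]
    intro hs
    apply hσ
    apply Subtype.ext
    apply Finset.map_injective e.toEmbedding
    simp only [hm]
    exact hs.symm
  · simp

/-- A linear combination of distinct simplices has the sum of the squared coefficients as
squared norm. -/
theorem norm_sq_comb {W κ : Type} [LinearOrder W] [DecidableEq κ] {m k : ℕ} (e : Fin m ↪o W)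
    (J : Finset κ)
    (Ψ : κ → Finset W) (b : κ → ℝ) (h : ∀ s ∈ J, ∀ x ∈ Ψ s, ∃ z, e z = x)
    (hc : ∀ s ∈ J, (Ψ s).card = k + 1) (hi : Set.InjOn Ψ J) :
    ∑ σ : SimpIdx (Fin m) k,
      (∑ s ∈ J, b s * (if Ψ s = σ.1.map e.toEmbedding then 1 else 0)) ^ 2 = ∑ s ∈ J, b s ^ 2 := by
  simp_rw [sq, Finset.sum_mul]
  rw [Finset.sum_comm]
  refine Finset.sum_congr rfl fun s hs => ?_
  have := sum_delta e (h s hs) (hc s hs)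
    (fun ρ => b s * ∑ s' ∈ J, b s' * (if Ψ s' = ρ then 1 else 0))
  rw [Finset.sum_eq_single_of_mem s hs, if_pos rfl, mul_one] at this
  · rw [← this]
    exact Finset.sum_congr rfl fun σ _ => by ring
  · intro s' hs' hne
    rw [if_neg, mul_zero]
    exact fun h' => hne (hi hs' hs h')

/-- A complex whose facets `Φ t` have free ridges has no nonzero top-dimensional cycles, so the flow
`∑ c t • Φ t` is the only one with its boundary `∑ b s • Ψ s`, and effective resistance is a ratio
of squared norms. Freeness of the ridge `free t` is relative to a well-founded rank: the other
facets containing it have smaller rank. The vertices form a finite subset of an arbitrary linear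
order `W`, and are renamed to elements of `Fin m` by the increasing enumeration. -/
theorem core {W ι κ R : Type} [LinearOrder W] [DecidableEq ι] [DecidableEq κ] [LinearOrder R]
    [WellFoundedLT R] (d : ℕ)
    (I : Finset ι) (Φ free : ι → Finset W) (rk : ι → R) (c : ι → ℝ)
    (hΦ : ∀ t ∈ I, (Φ t).card = d + 2) (hfree : ∀ t ∈ I, (free t).card = d + 1)
    (hsub : ∀ t ∈ I, free t ⊆ Φ t)
    (hrk : ∀ t ∈ I, ∀ t' ∈ I, free t ⊆ Φ t' → t' = t ∨ rk t' < rk t)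
    (J : Finset κ) (Ψ : κ → Finset W) (b : κ → ℝ)
    (hΨ : ∀ s ∈ J, (Ψ s).card = d + 1) (hΨsub : ∀ s ∈ J, ∃ t ∈ I, Ψ s ⊆ Φ t)
    (hΨinj : Set.InjOn Ψ J)
    (hb : ∀ ρ, ∑ t ∈ I, c t * (inc ρ (Φ t) : ℝ) = ∑ s ∈ J, b s * (if Ψ s = ρ then 1 else 0))
    (hβ : 0 < ∑ s ∈ J, b s ^ 2) :
    ∃ (m : ℕ) (B : SComplex (Fin m)) (y : SimpIdx (Fin m) (d + 1) → ℝ),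
      (∀ s ∈ B.faces, s.card ≤ d + 2) ∧ B.supportedOn y ∧
      nface B (d + 1) = I.card ∧
      y ⬝ᵥ y = ((d : ℝ) + 2) * ((∑ t ∈ I, c t ^ 2) / ∑ s ∈ J, b s ^ 2) ∧
      (gbdry (Fin m) d *ᵥ y) ⬝ᵥ (gbdry (Fin m) d *ᵥ y) = (d : ℝ) + 2 ∧
      (∀ f : SimpIdx (Fin m) (d + 1) → ℝ, B.supportedOn f →
        gbdry (Fin m) d *ᵥ f = 0 → f = 0) ∧
      B.effRes d ((Real.sqrt ((d : ℝ) + 2))⁻¹ • (gbdry (Fin m) d *ᵥ y)) =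
        (∑ t ∈ I, c t ^ 2) / ∑ s ∈ J, b s ^ 2 := by
  have hinj : Set.InjOn Φ I := by
    intro t ht t' ht' h
    rcases hrk t ht t' ht' (h ▸ hsub t ht) with h1 | h1
    · exact h1.symm
    rcases hrk t' ht' t ht (h ▸ hsub t' ht') with h2 | h2
    · exact h2
    · exact absurd h1 h2.asymm
  set U := I.biUnion Φ with hU
  set e := U.orderEmbOfFin rfl with he
  have hUe : ∀ x ∈ U, ∃ z, e z = x := by
    intro x hx
    have : x ∈ Set.range e := by rw [he, Finset.range_orderEmbOfFin]; exact hx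
    exact this
  have hΦU : ∀ t ∈ I, ∀ x ∈ Φ t, ∃ z, e z = x := fun t ht x hx =>
    hUe x (Finset.mem_biUnion.2 ⟨t, ht, hx⟩)
  have hfreeU : ∀ t ∈ I, ∀ x ∈ free t, ∃ z, e z = x := fun t ht x hx =>
    hΦU t ht x (hsub t ht hx)
  have hΨU : ∀ s ∈ J, ∀ x ∈ Ψ s, ∃ z, e z = x := fun s hs x hx => by
    obtain ⟨t, ht, h⟩ := hΨsub s hs
    exact hΦU t ht x (h hx)
  have hpc : ∀ {σ : Finset W}, (∀ x ∈ σ, ∃ z, e z = x) → (pull e σ).card = σ.card := by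
    intro σ h
    conv_rhs => rw [← map_pull e h, Finset.card_map]
  -- The flow before it is scaled by `q`, which makes the squared norm of its boundary `d + 2`.
  set y₀ : SimpIdx (Fin U.card) (d + 1) → ℝ := fun σ =>
    ∑ t ∈ I, c t * (if Φ t = σ.1.map e.toEmbedding then 1 else 0) with hy₀
  set β := ∑ s ∈ J, b s ^ 2 with hβdef
  have hd2 : (0 : ℝ) < (d : ℝ) + 2 := by positivity
  set q := Real.sqrt (((d : ℝ) + 2) / β) with hq
  have hq2 : q ^ 2 = ((d : ℝ) + 2) / β := Real.sq_sqrt (by positivity)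
  have hy₀n : y₀ ⬝ᵥ y₀ = ∑ t ∈ I, c t ^ 2 := by
    rw [← norm_sq_comb e I Φ c hΦU hΦ hinj]
    simp [dotProduct, sq, y₀]
  have hbd : gbdry (Fin U.card) d *ᵥ y₀ = fun τ =>
      ∑ s ∈ J, b s * (if Ψ s = τ.1.map e.toEmbedding then 1 else 0) := by
    funext τ
    rw [← hb]
    simp only [mulVec, dotProduct, gbdry, gbdryZ, Matrix.map_apply, y₀, Finset.mul_sum]
    rw [Finset.sum_comm]
    refine Finset.sum_congr rfl fun t ht => ?_
    rw [← sum_delta (k := d + 1) e (hΦU t ht) (hΦ t ht)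
      (fun ρ => c t * (inc (τ.1.map e.toEmbedding) ρ : ℝ))]
    refine Finset.sum_congr rfl fun σ _ => ?_
    rw [bsign_map e]
    ring
  have hbdn : (gbdry (Fin U.card) d *ᵥ y₀) ⬝ᵥ (gbdry (Fin U.card) d *ᵥ y₀) = β := by
    rw [hbd, hβdef, ← norm_sq_comb e J Ψ b hΨU hΨ hΨinj]
    simp [dotProduct, sq]
  let B : SComplex (Fin U.card) :=
    { faces := (I.biUnion fun t => (pull e (Φ t)).powerset).erase ∅
      down_closed := by
        intro s hs t hts htn
        simp only [Finset.mem_erase, Finset.mem_biUnion, Finset.mem_powerset] at hs ⊢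
        obtain ⟨_, i, hi, h⟩ := hs
        exact ⟨htn.ne_empty, i, hi, hts.trans h⟩ }
  have hBtop : ∀ σ : Finset (Fin U.card), σ ∈ B.faces → σ.card = d + 2 →
      ∃ t ∈ I, σ = pull e (Φ t) := by
    intro σ hσ hc
    simp only [B, Finset.mem_erase, Finset.mem_biUnion, Finset.mem_powerset] at hσ
    obtain ⟨_, t, ht, h⟩ := hσ
    exact ⟨t, ht, Finset.eq_of_subset_of_card_le h (by rw [hpc (hΦU t ht), hΦ t ht, hc])⟩
  have hBmem : ∀ t ∈ I, pull e (Φ t) ∈ B.faces := by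
    intro t ht
    simp only [B, Finset.mem_erase, Finset.mem_biUnion, Finset.mem_powerset]
    refine ⟨?_, t, ht, subset_rfl⟩
    rw [← Finset.nonempty_iff_ne_empty, ← Finset.card_pos, hpc (hΦU t ht), hΦ t ht]
    omega
  have hker : ∀ f : SimpIdx (Fin U.card) (d + 1) → ℝ, B.supportedOn f →
        gbdry (Fin U.card) d *ᵥ f = 0 → f = 0 := by
    intro f hf hf0
    -- Evaluating the boundary of `f` at `free t` leaves only the coefficient of `Φ t`, since those of
    -- smaller rank vanish by induction.
    have key : ∀ r : R, ∀ t ∈ I, rk t = r → ∀ σ : SimpIdx (Fin U.card) (d + 1),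
        σ.1 = pull e (Φ t) → f σ = 0 := by
      intro r
      induction r using WellFoundedLT.induction with
      | ind r ih =>
        intro t ht hr σ hσ
        have hτc : (pull e (free t)).card = d + 1 := by rw [hpc (hfreeU t ht), hfree t ht]
        have h0 := congrFun hf0 ⟨pull e (free t), hτc⟩
        simp only [mulVec, dotProduct, gbdry, gbdryZ, Matrix.map_apply, Pi.zero_apply] at h0
        rw [Finset.sum_eq_single σ] at h0
        · refine (mul_eq_zero.1 h0).resolve_left ?_
          rw [bsign_map e, hσ, map_pull e (hfreeU t ht), map_pull e (hΦU t ht)]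
          exact_mod_cast inc_ne_zero (hsub t ht) (by rw [hfree t ht, hΦ t ht])
        · intro σ' _ hne
          by_contra hn
          have hfσ' := right_ne_zero_of_mul hn
          obtain ⟨t', ht', hσ'⟩ := hBtop _ (hf σ' hfσ') σ'.2
          have hi := left_ne_zero_of_mul hn
          rw [bsign_map e, hσ', map_pull e (hfreeU t ht), map_pull e (hΦU t' ht')] at hi
          rcases hrk t ht t' ht' (subset_of_inc_ne_zero (by exact_mod_cast hi)) with h | h
          · subst h
            exact hne (Subtype.ext (hσ'.trans hσ.symm))
          · exact hfσ' (ih _ (hr ▸ h) t' ht' rfl σ' hσ')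
        · simp
    funext σ
    by_contra hn
    obtain ⟨t, ht, h⟩ := hBtop _ (hf σ hn) σ.2
    exact hn (key _ t ht rfl σ h)
  have hsupp₀ : B.supportedOn y₀ := by
    intro σ hσ
    obtain ⟨t, ht, h⟩ := Finset.exists_ne_zero_of_sum_ne_zero hσ
    have h1 : Φ t = σ.1.map e.toEmbedding := by
      by_contra hn
      exact h (by rw [if_neg hn, mul_zero])
    have : σ.1 = pull e (Φ t) := by
      apply Finset.map_injective e.toEmbedding
      rw [map_pull e (hΦU t ht), h1]
    rw [this]
    exact hBmem t ht
  have hyn : (q • y₀) ⬝ᵥ (q • y₀) = ((d : ℝ) + 2) * ((∑ t ∈ I, c t ^ 2) / β) := by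
    rw [smul_dotProduct, dotProduct_smul, hy₀n, smul_eq_mul, smul_eq_mul, ← mul_assoc, ← sq, hq2]
    ring
  have hsupp : ∀ r : ℝ, B.supportedOn (r • y₀) := fun r σ hσ =>
    hsupp₀ σ (right_ne_zero_of_mul hσ)
  refine ⟨U.card, B, q • y₀, ?_, hsupp q, ?_, hyn, ?_, hker, ?_⟩
  · intro s hs
    simp only [B, Finset.mem_erase, Finset.mem_biUnion, Finset.mem_powerset] at hs
    obtain ⟨_, t, ht, h⟩ := hs
    exact (Finset.card_le_card h).trans (by rw [hpc (hΦU t ht), hΦ t ht])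
  · rw [nface]
    rw [show (B.faces.filter fun s => s.card = d + 1 + 1) = I.image (fun t => pull e (Φ t)) from ?_]
    · apply Finset.card_image_of_injOn
      intro t ht t' ht' h
      apply hinj ht ht'
      rw [← map_pull e (hΦU t ht), ← map_pull e (hΦU t' ht')]
      exact congrArg _ h
    · ext σ
      simp only [Finset.mem_filter, Finset.mem_image]
      constructor
      · rintro ⟨h1, h2⟩
        obtain ⟨t, ht, h⟩ := hBtop σ h1 h2
        exact ⟨t, ht, h.symm⟩
      · rintro ⟨t, ht, rfl⟩
        exact ⟨hBmem t ht, by rw [hpc (hΦU t ht), hΦ t ht]⟩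
  · rw [mulVec_smul, smul_dotProduct, dotProduct_smul, hbdn, smul_eq_mul, smul_eq_mul,
      ← mul_assoc, ← sq, hq2]
    field_simp
  -- Uniqueness reduces the infimum in the definition of `effRes` to a single energy.
  · rw [← mulVec_smul, smul_smul, SComplex.effRes, SComplex.effResW]
    set r := (Real.sqrt ((d : ℝ) + 2))⁻¹ * q with hr
    have hset : {E : ℝ | ∃ f : SimpIdx (Fin U.card) (d + 1) → ℝ, B.supportedOn f ∧
        gbdry (Fin U.card) d *ᵥ f = gbdry (Fin U.card) d *ᵥ (r • y₀) ∧
        E = ∑ σ : SimpIdx (Fin U.card) (d + 1), f σ ^ 2 / 1} = {(r • y₀) ⬝ᵥ (r • y₀)} := by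
      ext E
      simp only [Set.mem_ofPred_eq, Set.mem_singleton_iff]
      have hE : ∀ f : SimpIdx (Fin U.card) (d + 1) → ℝ,
          ∑ σ : SimpIdx (Fin U.card) (d + 1), f σ ^ 2 / 1 = f ⬝ᵥ f := by
        intro f; simp [dotProduct, sq]
      constructor
      · rintro ⟨f, hf, hfb, rfl⟩
        have : f - r • y₀ = 0 := by
          apply hker
          · intro σ hσ
            by_contra hn
            have h1 : f σ = 0 := by by_contra h; exact hn (hf σ h)
            have h2 : (r • y₀) σ = 0 := by by_contra h; exact hn (hsupp r σ h)
            exact hσ (by rw [Pi.sub_apply, h1, h2, sub_zero])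
          · rw [mulVec_sub, hfb, sub_self]
        rw [sub_eq_zero.1 this, hE]
      · rintro rfl
        exact ⟨_, hsupp r, rfl, (hE _).symm⟩
    rw [hset, csInf_singleton, smul_dotProduct, dotProduct_smul, hy₀n, smul_eq_mul, smul_eq_mul,
      ← mul_assoc, ← sq, hr, mul_pow, hq2, inv_pow, Real.sq_sqrt hd2.le]
    field_simp

/-! ### Joins with the boundary of a simplex -/

/-- The simplex `σ` as a chain. -/
def delta {W : Type} [LinearOrder W] (σ : Finset W) : Finset W → ℝ :=
  fun ρ => if σ = ρ then 1 else 0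

/-- The boundary of the simplex `σ` as a chain. -/
def bd {W : Type} [LinearOrder W] (σ : Finset W) : Finset W → ℝ := fun ρ => (inc ρ σ : ℝ)

/-- The sign `(-1)ⁱ`, where `i` is the position of `a` in `A`. -/
def posSign {W : Type} [LinearOrder W] (A : Finset W) (a : W) : ℝ :=
  (-1) ^ (A.filter (· < a)).card

theorem posSign_sq {W : Type} [LinearOrder W] (A : Finset W) (a : W) : posSign A a ^ 2 = 1 := by
  rw [posSign, ← pow_mul, mul_comm, pow_mul]; simp

/-- The join of the simplex `s` with the fundamental cycle of the boundary of the simplex `A`. -/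
def join {W : Type} [LinearOrder W] (A s : Finset W) : Finset W → ℝ :=
  ∑ a ∈ A, posSign A a • delta (s ∪ A.erase a)

/-- The boundary of `join A s`, as a combination of boundaries of simplices. -/
def bdJoin {W : Type} [LinearOrder W] (A s : Finset W) : Finset W → ℝ :=
  ∑ a ∈ A, posSign A a • bd (s ∪ A.erase a)

theorem bd_eq {W : Type} [LinearOrder W] (σ : Finset W) :
    bd σ = ∑ x ∈ σ, posSign σ x • delta (σ.erase x) := by
  funext ρ
  simp [bd, inc_eq_sum, delta, posSign]

/-- Removing two vertices in the two possible orders gives opposite signs. -/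
theorem posSign_erase {W : Type} [LinearOrder W] {A : Finset W} {a b : W} (ha : a ∈ A)
    (hab : a < b) :
    posSign A a * posSign (A.erase a) b = -(posSign A b * posSign (A.erase b) a) := by
  have h1 : ((A.erase a).filter (· < b)).card + 1 = (A.filter (· < b)).card := by
    rw [Finset.filter_erase, Finset.card_erase_add_one]
    simp [ha, hab]
  have h2 : (A.erase b).filter (· < a) = A.filter (· < a) := by
    ext x
    simp only [Finset.mem_filter, Finset.mem_erase]
    constructor
    · tauto
    · rintro ⟨h, h'⟩
      exact ⟨⟨(h'.trans hab).ne, h⟩, h'⟩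
  rw [posSign, posSign, posSign, posSign, h2, ← h1, pow_succ]
  ring

theorem posSign_erase_ne {W : Type} [LinearOrder W] {A : Finset W} {a b : W} (ha : a ∈ A)
    (hb : b ∈ A) (hab : a ≠ b) :
    posSign A a * posSign (A.erase a) b = -(posSign A b * posSign (A.erase b) a) := by
  rcases lt_or_gt_of_ne hab with h | h
  · exact posSign_erase ha h
  · rw [posSign_erase hb h, neg_neg]

/-- Since the boundary of the simplex `A` is a cycle, the boundary of a join with it is the join
of the boundary. -/
theorem bdJoin_eq {W : Type} [LinearOrder W] {A s : Finset W} (h : ∀ x ∈ s, ∀ a ∈ A, x < a) :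
    bdJoin A s = ∑ x ∈ s, posSign s x • join A (s.erase x) := by
  have hdisj : ∀ a, Disjoint s (A.erase a) := by
    intro a
    rw [Finset.disjoint_left]
    intro x hx hxA
    exact (h x hx x (Finset.mem_of_mem_erase hxA)).false
  have hbd : ∀ a ∈ A, bd (s ∪ A.erase a) =
      (∑ x ∈ s, posSign s x • delta (s.erase x ∪ A.erase a)) +
      ∑ b ∈ A.erase a, ((-1) ^ s.card * posSign (A.erase a) b) •
        delta (s ∪ (A.erase a).erase b) := by
    intro a _
    rw [bd_eq, Finset.sum_union (hdisj a)]
    congr 1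
    · refine Finset.sum_congr rfl fun x hx => ?_
      have hxA : x ∉ A.erase a := Finset.disjoint_left.1 (hdisj a) hx
      rw [Finset.erase_union_distrib, Finset.erase_eq_of_notMem hxA]
      congr 1
      rw [posSign, posSign, Finset.filter_union, Finset.filter_false_of_mem (s := A.erase a),
        Finset.union_empty]
      intro b hb
      exact (h x hx b (Finset.mem_of_mem_erase hb)).asymm
    · refine Finset.sum_congr rfl fun b hb => ?_
      have hbs : b ∉ s := Finset.disjoint_right.1 (hdisj a) hb
      rw [Finset.erase_union_distrib, Finset.erase_eq_of_notMem hbs]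
      congr 1
      rw [posSign, posSign, Finset.filter_union, Finset.filter_true_of_mem (s := s),
        Finset.card_union_of_disjoint, pow_add]
      · exact (hdisj a).mono_right (Finset.filter_subset _ _)
      · intro x hx
        exact h x hx b (Finset.mem_of_mem_erase hb)
  -- `H a b` is the term in which both `a` and `b` are removed from `A`; it is antisymmetric, so these
  -- terms cancel.
  set H : W → W → Finset W → ℝ := fun a b => if b = a then 0 else
    ((-1) ^ s.card * (posSign A a * posSign (A.erase a) b)) • delta (s ∪ (A.erase a).erase b)
    with hH
  have hanti : ∀ a ∈ A, ∀ b ∈ A, H a b = - H b a := by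
    intro a ha b hb
    by_cases hab : b = a
    · simp [hH, hab]
    · simp only [hH, if_neg hab, if_neg (Ne.symm hab), Finset.erase_right_comm (a := b) (b := a),
        posSign_erase_ne ha hb (Ne.symm hab), mul_neg, neg_smul]
  have hzero : ∑ a ∈ A, ∑ b ∈ A, H a b = 0 := by
    rw [← self_eq_neg]
    conv_lhs => rw [Finset.sum_comm]
    rw [← Finset.sum_neg_distrib]
    refine Finset.sum_congr rfl fun b hb => ?_
    rw [← Finset.sum_neg_distrib]
    exact Finset.sum_congr rfl fun a ha => hanti a ha b hb
  have hH' : ∀ a ∈ A, ∑ b ∈ A, H a b = posSign A a •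
      ∑ b ∈ A.erase a, ((-1) ^ s.card * posSign (A.erase a) b) •
        delta (s ∪ (A.erase a).erase b) := by
    intro a ha
    rw [← Finset.add_sum_erase A _ ha, Finset.smul_sum]
    simp only [hH, if_true, zero_add]
    refine Finset.sum_congr rfl fun b hb => ?_
    rw [if_neg (Finset.ne_of_mem_erase hb), smul_smul]
    congr 1
    ring
  calc bdJoin A s = ∑ a ∈ A, (posSign A a • (∑ x ∈ s, posSign s x • delta (s.erase x ∪ A.erase a))
        + ∑ b ∈ A, H a b) := by
        rw [bdJoin]
        refine Finset.sum_congr rfl fun a ha => ?_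
        rw [hbd a ha, smul_add, hH' a ha]
    _ = ∑ x ∈ s, posSign s x • join A (s.erase x) := by
        rw [Finset.sum_add_distrib, hzero, add_zero]
        simp only [join, Finset.smul_sum]
        rw [Finset.sum_comm]
        refine Finset.sum_congr rfl fun x _ => Finset.sum_congr rfl fun a _ => ?_
        rw [smul_comm]

/-- The orientation sign of the pair `(u, v)`. -/
def sg {W : Type} [LinearOrder W] (u v : W) : ℝ := if u < v then 1 else -1

theorem sg_of_lt {W : Type} [LinearOrder W] {u v : W} (h : u < v) : sg u v = 1 := if_pos h

theorem sg_of_gt {W : Type} [LinearOrder W] {u v : W} (h : v < u) : sg u v = -1 := if_neg h.asymm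

theorem sg_sq {W : Type} [LinearOrder W] (u v : W) : sg u v ^ 2 = 1 := by
  unfold sg; split_ifs <;> norm_num

/-- The join of the oriented edge `u → v` with the boundary of the simplex `A`. -/
def edge {W : Type} [LinearOrder W] (A : Finset W) (u v : W) : Finset W → ℝ :=
  sg u v • join A {u, v}

/-- The boundary of the join of the oriented triangle `u v w` with the boundary of `A`. -/
def bdTri {W : Type} [LinearOrder W] (A : Finset W) (u v w : W) : Finset W → ℝ :=
  (sg u v * sg v w * sg u w) • bdJoin A {u, v, w}

theorem edge_symm {W : Type} [LinearOrder W] (A : Finset W) {u v : W} (h : u ≠ v) :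
    edge A v u = - edge A u v := by
  rw [edge, edge, Finset.pair_comm, ← neg_smul]
  congr 1
  rcases lt_or_gt_of_ne h with h | h <;> simp [sg_of_lt h, sg_of_gt h]

theorem bdTri_of_lt {W : Type} [LinearOrder W] {A : Finset W} {u v w : W}
    (huv : u < v) (hvw : v < w) (hu : ∀ a ∈ A, u < a) (hv : ∀ a ∈ A, v < a)
    (hw : ∀ a ∈ A, w < a) :
    bdTri A u v w = edge A v w - edge A u w + edge A u v := by
  have huw := huv.trans hvw
  have e1 : ({u, v, w} : Finset W).erase u = {v, w} := by
    ext x; simp only [Finset.mem_erase, Finset.mem_insert, Finset.mem_singleton]; grind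
  have e2 : ({u, v, w} : Finset W).erase v = {u, w} := by
    ext x; simp only [Finset.mem_erase, Finset.mem_insert, Finset.mem_singleton]; grind
  have e3 : ({u, v, w} : Finset W).erase w = {u, v} := by
    ext x; simp only [Finset.mem_erase, Finset.mem_insert, Finset.mem_singleton]; grind
  have f1 : ({u, v, w} : Finset W).filter (· < u) = ∅ := by
    ext x; simp only [Finset.mem_filter, Finset.mem_insert, Finset.mem_singleton]; grind
  have f2 : ({u, v, w} : Finset W).filter (· < v) = {u} := by
    ext x; simp only [Finset.mem_filter, Finset.mem_insert, Finset.mem_singleton]; grind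
  have f3 : ({u, v, w} : Finset W).filter (· < w) = {u, v} := by
    ext x; simp only [Finset.mem_filter, Finset.mem_insert, Finset.mem_singleton]; grind
  have p1 : posSign ({u, v, w} : Finset W) u = 1 := by rw [posSign, f1]; simp
  have p2 : posSign ({u, v, w} : Finset W) v = -1 := by rw [posSign, f2]; simp
  have p3 : posSign ({u, v, w} : Finset W) w = 1 := by
    rw [posSign, f3, Finset.card_pair huv.ne]; norm_num
  rw [bdTri, bdJoin_eq, Finset.sum_insert, Finset.sum_insert, Finset.sum_singleton,
    e1, e2, e3, p1, p2, p3, edge, edge, edge, sg_of_lt huv, sg_of_lt hvw, sg_of_lt huw]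
  · simp only [mul_one, one_smul, neg_smul]
    abel
  · simpa using hvw.ne
  · simp [huv.ne, huw.ne]
  · simp only [Finset.mem_insert, Finset.mem_singleton]
    rintro x (rfl | rfl | rfl) <;> assumption

theorem bdTri_swap₁ {W : Type} [LinearOrder W] (A : Finset W) {u v w : W} (h : u ≠ v) :
    bdTri A v u w = - bdTri A u v w := by
  rw [bdTri, bdTri, Finset.insert_comm, ← neg_smul]
  congr 1
  rcases lt_or_gt_of_ne h with h | h <;> simp [sg_of_lt h, sg_of_gt h] <;> ring

theorem bdTri_swap₂ {W : Type} [LinearOrder W] (A : Finset W) {u v w : W} (h : v ≠ w) :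
    bdTri A u w v = - bdTri A u v w := by
  rw [bdTri, bdTri, Finset.pair_comm, ← neg_smul]
  congr 1
  rcases lt_or_gt_of_ne h with h | h <;> simp [sg_of_lt h, sg_of_gt h] <;> ring

/-- The boundary of an oriented triangle, joined with the boundary of `A`, is the sum of its oriented
edges, whatever the order of its vertices. -/
theorem bdTri_eq {W : Type} [LinearOrder W] {A : Finset W} {u v w : W}
    (huv : u ≠ v) (hvw : v ≠ w) (huw : u ≠ w) (hu : ∀ a ∈ A, u < a) (hv : ∀ a ∈ A, v < a)
    (hw : ∀ a ∈ A, w < a) :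
    bdTri A u v w = edge A v w - edge A u w + edge A u v := by
  rcases lt_or_gt_of_ne huv with h1 | h1 <;> rcases lt_or_gt_of_ne hvw with h2 | h2 <;>
    rcases lt_or_gt_of_ne huw with h3 | h3
  · exact bdTri_of_lt h1 h2 hu hv hw
  · exact absurd (h1.trans h2) h3.asymm
  -- `u < w < v`
  · rw [bdTri_swap₂ A hvw.symm, bdTri_of_lt h3 h2 hu hw hv, edge_symm A hvw.symm]
    abel
  -- `w < u < v`
  · rw [bdTri_swap₂ A hvw.symm, bdTri_swap₁ A huw.symm, bdTri_of_lt h3 h1 hw hu hv,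
      edge_symm A hvw.symm, edge_symm A huw.symm]
    abel
  -- `v < u < w`
  · rw [bdTri_swap₁ A huv.symm, bdTri_of_lt h1 h3 hv hu hw, edge_symm A huv.symm]
    abel
  -- `v < w < u`
  · rw [bdTri_swap₁ A huv.symm, bdTri_swap₂ A huw.symm, bdTri_of_lt h2 h3 hv hw hu,
      edge_symm A huv.symm, edge_symm A huw.symm]
    abel
  · exact absurd (h2.trans h1) h3.asymm
  -- `w < v < u`
  · rw [bdTri_swap₁ A huv.symm, bdTri_swap₂ A huw.symm, bdTri_swap₁ A hvw.symm,
      bdTri_of_lt h2 h1 hw hv hu, edge_symm A huv.symm, edge_symm A huw.symm,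
      edge_symm A hvw.symm]
    abel

theorem card_union_erase {W : Type} [LinearOrder W] {A s : Finset W} {a : W} (ha : a ∈ A)
    (h : ∀ x ∈ s, ∀ a ∈ A, x < a) : (s ∪ A.erase a).card + 1 = s.card + A.card := by
  rw [Finset.card_union_of_disjoint, add_assoc, Finset.card_erase_add_one ha]
  rw [Finset.disjoint_left]
  intro x hx hxA
  exact (h x hx x (Finset.mem_of_mem_erase hxA)).false

theorem union_erase_subset {W : Type} [LinearOrder W] {A s t : Finset W} {a b : W} (hb : b ∈ A)
    (hs : ∀ x ∈ s, ∀ a ∈ A, x < a) (ht : ∀ x ∈ t, ∀ a ∈ A, x < a)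
    (hsub : s ∪ A.erase a ⊆ t ∪ A.erase b) : s ⊆ t ∧ a = b := by
  constructor
  · intro x hx
    rcases Finset.mem_union.1 (hsub (Finset.mem_union_left _ hx)) with h | h
    · exact h
    · exact absurd (hs x hx x (Finset.mem_of_mem_erase h)) (lt_irrefl x)
  · by_contra hab
    rcases Finset.mem_union.1 (hsub (Finset.mem_union_right _
      (Finset.mem_erase.2 ⟨Ne.symm hab, hb⟩))) with h | h
    · exact (ht b h b hb).false
    · exact Finset.notMem_erase b A h

/-- The case of `core` in which the facets are the joins of the triangles `u t, v t, w t` with the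
facets of the boundary of a simplex `A`. The free edge `{p t, q t}` of a triangle gives the free
ridges of its joins, and the chain with coefficients `c` has as boundary the closed path
`g 0, g 1, g 2, g 3`. All triangles precede `A` in the order of the vertices. -/
theorem core_join {W ι R : Type} [LinearOrder W] [DecidableEq ι] [LinearOrder R]
    [WellFoundedLT R] (d : ℕ) (A : Finset W) (hA : A.card = d) (hd : 1 ≤ d)
    (I : Finset ι) (u v w p q : ι → W) (rk : ι → R) (c : ι → ℝ)
    (hne : ∀ t ∈ I, u t ≠ v t ∧ v t ≠ w t ∧ u t ≠ w t ∧ p t ≠ q t)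
    (hlt : ∀ t ∈ I, ∀ a ∈ A, u t < a ∧ v t < a ∧ w t < a)
    (hsub : ∀ t ∈ I, {p t, q t} ⊆ ({u t, v t, w t} : Finset W))
    (hrk : ∀ t ∈ I, ∀ t' ∈ I, {p t, q t} ⊆ ({u t', v t', w t'} : Finset W) →
      t' = t ∨ rk t' < rk t)
    (g : ℕ → W) (hg : ∀ j < 3, g j ≠ g (j + 1))
    (hginj : ∀ j < 3, ∀ k < 3, ({g j, g (j + 1)} : Finset W) = {g k, g (k + 1)} → j = k)
    (hgsub : ∀ j < 3, ∃ t ∈ I, {g j, g (j + 1)} ⊆ ({u t, v t, w t} : Finset W))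
    (hb : ∑ t ∈ I, c t • (edge A (v t) (w t) - edge A (u t) (w t) + edge A (u t) (v t)) =
      ∑ j ∈ Finset.range 3, edge A (g j) (g (j + 1))) :
    ∃ (m : ℕ) (B : SComplex (Fin m)) (y : SimpIdx (Fin m) (d + 1) → ℝ),
      (∀ s ∈ B.faces, s.card ≤ d + 2) ∧ B.supportedOn y ∧
      nface B (d + 1) = I.card * d ∧
      y ⬝ᵥ y = ((d : ℝ) + 2) * ((∑ t ∈ I, c t ^ 2) / 3) ∧
      (gbdry (Fin m) d *ᵥ y) ⬝ᵥ (gbdry (Fin m) d *ᵥ y) = (d : ℝ) + 2 ∧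
      (∀ f : SimpIdx (Fin m) (d + 1) → ℝ, B.supportedOn f →
        gbdry (Fin m) d *ᵥ f = 0 → f = 0) ∧
      B.effRes d ((Real.sqrt ((d : ℝ) + 2))⁻¹ • (gbdry (Fin m) d *ᵥ y)) =
        (∑ t ∈ I, c t ^ 2) / 3 := by
  have hd0 : (d : ℝ) ≠ 0 := by positivity
  have hlt' : ∀ t ∈ I, ∀ x ∈ ({u t, v t, w t} : Finset W), ∀ a ∈ A, x < a := by
    intro t ht x hx a ha
    obtain ⟨h1, h2, h3⟩ := hlt t ht a ha
    simp only [Finset.mem_insert, Finset.mem_singleton] at hx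
    rcases hx with rfl | rfl | rfl <;> assumption
  have hltf : ∀ t ∈ I, ∀ x ∈ ({p t, q t} : Finset W), ∀ a ∈ A, x < a := fun t ht x hx =>
    hlt' t ht x (hsub t ht hx)
  have hltg : ∀ j < 3, ∀ x ∈ ({g j, g (j + 1)} : Finset W), ∀ a ∈ A, x < a := fun j hj x hx => by
    obtain ⟨t, ht, h⟩ := hgsub j hj
    exact hlt' t ht x (h hx)
  have hmem : ∀ (K : Finset ι) (x : ι × W), x ∈ K ×ˢ A → x.1 ∈ K ∧ x.2 ∈ A := fun K x hx =>
    Finset.mem_product.1 hx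
  have hmem' : ∀ (x : ℕ × W), x ∈ Finset.range 3 ×ˢ A → x.1 < 3 ∧ x.2 ∈ A := fun x hx => by
    simpa using hx
  -- The coefficients in terms of increasingly ordered simplices: `sg` gives the orientations of the
  -- triangles and edges, `posSign` that of the boundary of `A`.
  set c' : ι × W → ℝ := fun x => c x.1 *
    (sg (u x.1) (v x.1) * sg (v x.1) (w x.1) * sg (u x.1) (w x.1)) * posSign A x.2 with hc'
  set b : ℕ × W → ℝ := fun x => sg (g x.1) (g (x.1 + 1)) * posSign A x.2 with hbdef
  have hsumc : ∑ x ∈ I ×ˢ A, c' x ^ 2 = d * ∑ t ∈ I, c t ^ 2 := by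
    simp [hc', Finset.sum_product, mul_pow, sg_sq, posSign_sq, hA, Finset.mul_sum]
  have hsumb : ∑ x ∈ Finset.range 3 ×ˢ A, b x ^ 2 = d * 3 := by
    simp [hbdef, mul_pow, sg_sq, posSign_sq, hA]
    ring
  have := core (W := W) (ι := ι × W) (κ := ℕ × W) d (I ×ˢ A)
    (fun x => {u x.1, v x.1, w x.1} ∪ A.erase x.2) (fun x => {p x.1, q x.1} ∪ A.erase x.2)
    (fun x => rk x.1) c' ?_ ?_ ?_ ?_ (Finset.range 3 ×ˢ A)
    (fun x => {g x.1, g (x.1 + 1)} ∪ A.erase x.2) b ?_ ?_ ?_ ?_ ?_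
  · have hdiv : (∑ x ∈ I ×ˢ A, c' x ^ 2) / ∑ x ∈ Finset.range 3 ×ˢ A, b x ^ 2 =
        (∑ t ∈ I, c t ^ 2) / 3 := by
      rw [hsumc, hsumb, mul_div_mul_left _ _ hd0]
    rw [hdiv, Finset.card_product, hA] at this
    exact this
  · intro x hx
    obtain ⟨ht, ha⟩ := hmem I x hx
    obtain ⟨h1, h2, h3, _⟩ := hne _ ht
    have := card_union_erase ha (hlt' _ ht)
    rw [hA, Finset.card_eq_three.2 ⟨_, _, _, h1, h3, h2, rfl⟩] at this
    omega
  · intro x hx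
    obtain ⟨ht, ha⟩ := hmem I x hx
    have := card_union_erase ha (hltf _ ht)
    rw [hA, Finset.card_pair (hne _ ht).2.2.2] at this
    omega
  · intro x hx
    exact Finset.union_subset_union (hsub _ (hmem I x hx).1) subset_rfl
  · intro x hx x' hx' h
    obtain ⟨ht, ha⟩ := hmem I x hx
    obtain ⟨ht', ha'⟩ := hmem I x' hx'
    obtain ⟨h1, h2⟩ := union_erase_subset ha' (hltf _ ht) (hlt' _ ht') h
    exact (hrk _ ht _ ht' h1).imp (fun h => Prod.ext h h2.symm) id
  · intro x hx
    obtain ⟨ht, ha⟩ := hmem' x hx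
    have := card_union_erase ha (hltg _ ht)
    rw [hA, Finset.card_pair (hg _ ht)] at this
    omega
  · intro x hx
    obtain ⟨ht, ha⟩ := hmem' x hx
    obtain ⟨t, ht, h⟩ := hgsub _ ht
    exact ⟨(t, x.2), Finset.mem_product.2 ⟨ht, ha⟩, Finset.union_subset_union h subset_rfl⟩
  · intro x hx x' hx' h
    obtain ⟨hj, ha⟩ := hmem' x hx
    obtain ⟨hj', ha'⟩ := hmem' x' hx'
    obtain ⟨h1, h2⟩ := union_erase_subset ha' (hltg _ hj) (hltg _ hj') h.le
    obtain ⟨h3, _⟩ := union_erase_subset ha (hltg _ hj') (hltg _ hj) h.ge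
    exact Prod.ext (hginj _ hj _ hj' (h1.antisymm h3)) h2
  · intro ρ
    have h1 : ∑ t ∈ I, c t • bdTri A (u t) (v t) (w t) =
        ∑ j ∈ Finset.range 3, edge A (g j) (g (j + 1)) := by
      rw [← hb]
      refine Finset.sum_congr rfl fun t ht => ?_
      obtain ⟨h1, h2, h3, _⟩ := hne _ ht
      rw [bdTri_eq h1 h2 h3 (fun a ha => (hlt t ht a ha).1) (fun a ha => (hlt t ht a ha).2.1)
        (fun a ha => (hlt t ht a ha).2.2)]
    have h2 := congrFun h1 ρ
    simp only [bdTri, bdJoin, edge, join, Finset.sum_apply, Pi.smul_apply, smul_eq_mul, bd,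
      delta, Finset.mul_sum] at h2
    rw [Finset.sum_product, Finset.sum_product]
    refine Eq.trans ?_ (h2.trans ?_)
    · exact Finset.sum_congr rfl fun t _ => Finset.sum_congr rfl fun a _ => by
        simp only [hc']; ring
    · exact Finset.sum_congr rfl fun t _ => Finset.sum_congr rfl fun a _ => by
        simp only [hbdef]; ring
  · rw [hsumb]
    positivity

/-! ### The two-dimensional complex -/

/-- The triangles of the two-dimensional complex: in the block from level `i` to level `i + 1`, the
`k`-th triangle `fan i k` of the fan over the cycle of level `i`, and the triangles `outer i k` and
`inner i k` of the strip, which have an edge on the cycle of level `i` and on the triangle of level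
`i + 1` respectively; the triangle `cap` filling the last level; the pendant triangles `pad r`. -/
inductive Cell
  | fan (i k : ℕ)
  | outer (i k : ℕ)
  | inner (i k : ℕ)
  | cap
  | pad (r : ℕ)
  deriving DecidableEq

namespace Cell

/-- The `k`-th vertex of level `i`. The order is lexicographic, so lower levels come first. -/
def vx (i k : ℕ) : ℕ ×ₗ ℕ := toLex (i, k)

theorem vx_inj {i k i' k' : ℕ} : vx i k = vx i' k' ↔ i = i' ∧ k = k' := by
  simp [vx]

theorem vx_lt {i k i' k' : ℕ} (h : i < i') : vx i k < vx i' k' := by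
  rw [vx, vx, Prod.Lex.toLex_lt_toLex]; exact Or.inl h

/-- The position on the cycle `0, 1, …, N - 1, 0` after `k` steps, for `k ≤ N`. -/
def wi (N k : ℕ) : ℕ := if k = N then 0 else k

/-- The position on the triangle `N - 1, 0, N` (where `N` is the apex) after `k` steps. -/
def qi (N k : ℕ) : ℕ := if k % 3 = 0 then N - 1 else if k % 3 = 1 then 0 else N

theorem qi_inj {N k k' : ℕ} (hN : 2 ≤ N) : qi N k = qi N k' ↔ k % 3 = k' % 3 := by
  unfold qi
  split_ifs <;> omega

/-- The first vertex of a triangle, in the chosen orientation. -/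
def u (N n : ℕ) : Cell → ℕ ×ₗ ℕ
  | fan i _ => vx i N
  | outer i k => vx i (wi N k)
  | inner i k => vx i (wi N k)
  | cap => vx n (qi N 0)
  | pad r => vx (n + 1) r

/-- The second vertex of a triangle, in the chosen orientation. -/
def v (N n : ℕ) : Cell → ℕ ×ₗ ℕ
  | fan i k => vx i (wi N k)
  | outer i k => vx i (wi N (k + 1))
  | inner i k => vx (i + 1) (qi N (k + 1))
  | cap => vx n (qi N 1)
  | pad _ => vx 0 N

/-- The third vertex of a triangle, in the chosen orientation. -/
def w (N n : ℕ) : Cell → ℕ ×ₗ ℕ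
  | fan i k => vx i (wi N (k + 1))
  | outer i k => vx (i + 1) (qi N (k + 1))
  | inner i k => vx (i + 1) (qi N k)
  | cap => vx n (qi N 2)
  | pad _ => vx 0 0

/-- One endpoint of the free edge of a triangle. -/
def p (N n : ℕ) : Cell → ℕ ×ₗ ℕ
  | fan i _ => vx i N
  | outer i k => vx i (wi N k)
  | inner i k => vx i (wi N k)
  | cap => vx n (qi N 0)
  | pad r => vx (n + 1) r

/-- The other endpoint of the free edge of a triangle. -/
def q (N n : ℕ) : Cell → ℕ ×ₗ ℕ
  | fan i k => vx i (wi N k)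
  | outer i k => vx i (wi N (k + 1))
  | inner i k => vx (i + 1) (qi N k)
  | cap => vx n (qi N 1)
  | pad _ => vx 0 0

/-- The rank of a triangle. It increases with the level, and within a block from the fan (in the
order of its triangles) to the outer and then the inner triangles of the strip. -/
def rk (N n : ℕ) : Cell → ℕ ×ₗ ℕ
  | fan i k => toLex (i, k + 1)
  | outer i _ => toLex (i, N + 1)
  | inner i _ => toLex (i, N + 2)
  | cap => toLex (n, 0)
  | pad _ => toLex (0, 0)

/-- The coefficient of a triangle in the chain with boundary the outermost triangle. -/
def coeff (D : ℝ) (n : ℕ) : Cell → ℝ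
  | fan i _ => -D ^ i
  | outer i _ => D ^ i
  | inner i _ => D ^ i
  | cap => D ^ n
  | pad _ => 0

/-- The triangles of the complex with `n` blocks, cycles of length `N`, and `P` pendant triangles. -/
def cells (N n P : ℕ) : Finset Cell :=
  ((Finset.range n ×ˢ Finset.range (N - 1)).image fun x => fan x.1 x.2) ∪
  ((Finset.range n ×ˢ Finset.range N).image fun x => outer x.1 x.2) ∪
  ((Finset.range n ×ˢ Finset.range N).image fun x => inner x.1 x.2) ∪
  {cap} ∪ (Finset.range P).image pad

theorem sum_cells {M : Type} [AddCommMonoid M] (N n P : ℕ) (f : Cell → M) :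
    ∑ t ∈ cells N n P, f t =
      ∑ i ∈ Finset.range n, (∑ k ∈ Finset.range (N - 1), f (fan i k) +
        ∑ k ∈ Finset.range N, f (outer i k) + ∑ k ∈ Finset.range N, f (inner i k)) +
      f cap + ∑ r ∈ Finset.range P, f (pad r) := by
  rw [cells, Finset.sum_union, Finset.sum_union, Finset.sum_union, Finset.sum_union,
    Finset.sum_image, Finset.sum_image, Finset.sum_image, Finset.sum_image,
    Finset.sum_product, Finset.sum_product, Finset.sum_product, Finset.sum_singleton,
    Finset.sum_add_distrib, Finset.sum_add_distrib]
  all_goals first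
    | (rw [Finset.disjoint_left]; intro t h h'; cases t <;> simp_all)
    | (intro x _ y _ h; simp_all [Prod.ext_iff])

@[simp] theorem fan_mem {N n P i k : ℕ} : fan i k ∈ cells N n P ↔ i < n ∧ k < N - 1 := by
  simp [cells]

@[simp] theorem outer_mem {N n P i k : ℕ} : outer i k ∈ cells N n P ↔ i < n ∧ k < N := by
  simp [cells]

@[simp] theorem inner_mem {N n P i k : ℕ} : inner i k ∈ cells N n P ↔ i < n ∧ k < N := by
  simp [cells]

@[simp] theorem cap_mem {N n P : ℕ} : cap ∈ cells N n P := by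
  simp [cells]

@[simp] theorem pad_mem {N n P r : ℕ} : pad r ∈ cells N n P ↔ r < P := by
  simp [cells]

theorem vertices_ne {N n P : ℕ} (hN : 6 ≤ N) (t : Cell) (ht : t ∈ cells N n P) :
    u N n t ≠ v N n t ∧ v N n t ≠ w N n t ∧ u N n t ≠ w N n t ∧ p N n t ≠ q N n t := by
  cases t <;>
  (try simp only [fan_mem, outer_mem, inner_mem, pad_mem] at ht) <;>
  simp only [u, v, w, p, q, vx_inj, ne_eq, qi_inj (show 2 ≤ N by omega), wi] <;>
  first | omega | (split_ifs <;> omega)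

theorem free_subset {N n : ℕ} (t : Cell) :
    {p N n t, q N n t} ⊆ ({u N n t, v N n t, w N n t} : Finset (ℕ ×ₗ ℕ)) := by
  cases t <;> simp [Finset.insert_subset_iff, p, q, u, v, w]

/-- The edge `{p t, q t}` is free in the ranked sense. An edge from the cycle of level `i` to the
triangle of level `i + 1` lies in an inner and an outer triangle. An edge of the cycle lies in an
outer triangle and otherwise only in the fan or the preceding block. An edge to the apex lies in two
consecutive triangles of the fan, or for the first one in the preceding block, if `i > 0`, or in the
pendant triangles, if `i = 0`. An edge of the last level lies in the cap and the last block. -/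
theorem rank_lt {N n P : ℕ} (hN : 6 ≤ N) (hn : 1 ≤ n) (t : Cell) (ht : t ∈ cells N n P)
    (t' : Cell) (ht' : t' ∈ cells N n P)
    (h : {p N n t, q N n t} ⊆ ({u N n t', v N n t', w N n t'} : Finset (ℕ ×ₗ ℕ))) :
    t' = t ∨ rk N n t' < rk N n t := by
  cases t <;> cases t' <;>
  (try simp only [fan_mem, outer_mem, inner_mem, pad_mem] at ht ht') <;>
  simp only [Finset.insert_subset_iff, Finset.singleton_subset_iff, Finset.mem_insert,
    Finset.mem_singleton, p, q, u, v, w, vx_inj, qi_inj (show 2 ≤ N by omega), wi] at h <;>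
  simp only [rk, Prod.Lex.toLex_lt_toLex, fan.injEq, outer.injEq, inner.injEq, pad.injEq,
    reduceCtorEq, false_or, true_or] <;>
  first | omega | (split_ifs at h <;> first | omega | (simp only [and_false, false_or] at h; omega))

theorem lt_top {N n P a : ℕ} (t : Cell) (ht : t ∈ cells N n P) :
    u N n t < vx (n + 2) a ∧ v N n t < vx (n + 2) a ∧ w N n t < vx (n + 2) a := by
  cases t <;> (try simp only [fan_mem, outer_mem, inner_mem, pad_mem] at ht) <;>
  refine ⟨vx_lt ?_, vx_lt ?_, vx_lt ?_⟩ <;> omega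

/-- The oriented boundary triangle of level `i`, where `e x y` stands for the edge from `x` to `y`. -/
def gam {M : Type} [AddCommGroup M] (e : ℕ ×ₗ ℕ → ℕ ×ₗ ℕ → M) (N i : ℕ) : M :=
  ∑ j ∈ Finset.range 3, e (vx i (qi N j)) (vx i (qi N (j + 1)))

/-- The walk of length `3D` along the triangle of level `i` runs around it `D` times. -/
theorem sum_wrap {M : Type} [AddCommGroup M] [Module ℝ M] (e : ℕ ×ₗ ℕ → ℕ ×ₗ ℕ → M)
    (N i D : ℕ) :
    ∑ k ∈ Finset.range (3 * D), e (vx i (qi N k)) (vx i (qi N (k + 1))) =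
      (D : ℝ) • gam e N i := by
  induction D with
  | zero => simp
  | succ D ih =>
    have h : ∀ j, qi N (3 * D + j) = qi N j := fun j => by simp [qi]
    rw [mul_add, mul_one, Finset.sum_range_add, ih, Nat.cast_succ, add_smul, one_smul]
    congr 1
    rw [gam]
    refine Finset.sum_congr rfl fun j _ => ?_
    rw [add_assoc, h, h]

/-- The boundary of a triangle, where `e x y` stands for the edge from `x` to `y`. -/
def bdry {M : Type} [AddCommGroup M] (e : ℕ ×ₗ ℕ → ℕ ×ₗ ℕ → M) (N n : ℕ) (t : Cell) : M :=
  e (v N n t) (w N n t) - e (u N n t) (w N n t) + e (u N n t) (v N n t)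

/-- The boundary of a block: the triangle of level `i` minus `D` times that of level `i + 1`. -/
theorem block {M : Type} [AddCommGroup M] [Module ℝ M] (e : ℕ ×ₗ ℕ → ℕ ×ₗ ℕ → M)
    (he : ∀ x y, x ≠ y → e y x = - e x y) {N D : ℕ} (hND : N = 3 * D) (hD : 2 ≤ D) (n i : ℕ) :
    ∑ k ∈ Finset.range N, bdry e N n (outer i k) + ∑ k ∈ Finset.range N, bdry e N n (inner i k) -
      ∑ k ∈ Finset.range (N - 1), bdry e N n (fan i k) =
    gam e N i - (D : ℝ) • gam e N (i + 1) := by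
  obtain ⟨L, rfl⟩ : ∃ L, N = L + 1 := ⟨N - 1, by omega⟩
  set N := L + 1 with hN
  -- The strip joins the cycle to the walk: its inner edges cancel, those between the two boundary
  -- curves telescope.
  have h1 : ∑ k ∈ Finset.range N, bdry e N n (outer i k) +
      ∑ k ∈ Finset.range N, bdry e N n (inner i k) =
      ∑ k ∈ Finset.range N, e (vx i (wi N k)) (vx i (wi N (k + 1))) -
        (D : ℝ) • gam e N (i + 1) := by
    rw [← sum_wrap, ← hND, ← Finset.sum_add_distrib, ← Finset.sum_sub_distrib, ← sub_eq_zero,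
      ← Finset.sum_sub_distrib]
    have h := Finset.sum_range_sub (fun k => e (vx i (wi N k)) (vx (i + 1) (qi N k))) N
    have h0 : qi N N = qi N 0 := by rw [qi_inj (by omega)]; omega
    have h0' : wi N N = wi N 0 := by simp [wi]
    rw [h0, h0', sub_self] at h
    rw [← h]
    refine Finset.sum_congr rfl fun k _ => ?_
    simp only [bdry, u, v, w]
    rw [he (vx (i + 1) (qi N k)) (vx (i + 1) (qi N (k + 1)))]
    · abel
    · rw [ne_eq, vx_inj, qi_inj (by omega)]; omega
  have h2 : ∑ k ∈ Finset.range L, bdry e N n (fan i k) =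
      ∑ k ∈ Finset.range L, e (vx i (wi N k)) (vx i (wi N (k + 1))) +
      e (vx i N) (vx i 0) - e (vx i N) (vx i L) := by
    have h := Finset.sum_range_sub (fun k => e (vx i N) (vx i (wi N k))) L
    have h0 : wi N L = L := if_neg (by omega)
    have h0' : wi N 0 = 0 := by simp [wi]
    rw [h0, h0'] at h
    rw [add_sub_assoc, ← neg_sub (e (vx i N) (vx i L)), ← h, ← Finset.sum_neg_distrib,
      ← Finset.sum_add_distrib]
    refine Finset.sum_congr rfl fun k _ => ?_
    simp only [bdry, u, v, w]
    abel
  rw [h1, show N - 1 = L from rfl, h2, hN, Finset.sum_range_succ, ← hN]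
  have h3 : wi N L = L := if_neg (by omega)
  have h4 : wi N (L + 1) = 0 := if_pos rfl
  have h5 : gam e N i = e (vx i L) (vx i 0) + e (vx i 0) (vx i N) + e (vx i N) (vx i L) := by
    simp [gam, Finset.sum_range_succ, qi, hN]
  rw [h3, h4, h5, he (vx i 0) (vx i N)]
  · abel
  · rw [ne_eq, vx_inj]; omega

/-- The boundary of the weighted sum of all triangles is the outermost triangle, as the boundaries
of the weighted blocks telescope. -/
theorem sum_bdry {M : Type} [AddCommGroup M] [Module ℝ M] (e : ℕ ×ₗ ℕ → ℕ ×ₗ ℕ → M)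
    (he : ∀ x y, x ≠ y → e y x = - e x y) {N D : ℕ} (hND : N = 3 * D) (hD : 2 ≤ D) (n P : ℕ) :
    ∑ t ∈ cells N n P, coeff D n t • bdry e N n t = gam e N 0 := by
  have hcap : bdry e N n cap = gam e N n := by
    have h3 : qi N 3 = qi N 0 := rfl
    simp only [bdry, u, v, w, gam, Finset.sum_range_succ, Finset.sum_range_zero, zero_add,
      Nat.reduceAdd, h3]
    rw [he (vx n (qi N 0)) (vx n (qi N 2))]
    · abel
    · rw [ne_eq, vx_inj, qi_inj (by omega)]; omega
  rw [sum_cells]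
  simp only [coeff, zero_smul, Finset.sum_const_zero, add_zero, ← Finset.smul_sum, hcap]
  have h : ∀ i, -(D : ℝ) ^ i • ∑ k ∈ Finset.range (N - 1), bdry e N n (fan i k) +
      (D : ℝ) ^ i • ∑ k ∈ Finset.range N, bdry e N n (outer i k) +
      (D : ℝ) ^ i • ∑ k ∈ Finset.range N, bdry e N n (inner i k) =
      (D : ℝ) ^ i • gam e N i - (D : ℝ) ^ (i + 1) • gam e N (i + 1) := by
    intro i
    rw [pow_succ, mul_smul, ← smul_sub, ← block e he hND hD n i]
    simp only [smul_sub, smul_add, neg_smul]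
    abel
  rw [Finset.sum_congr rfl fun i _ => h i, Finset.sum_range_sub']
  simp

/-- The geometric sum of the squares `D²ⁱ`, for `i < n`, is at most `D²ⁿ / D`. -/
theorem geom_bound {D : ℝ} (hD : 2 ≤ D) (n : ℕ) :
    D * ∑ i ∈ Finset.range n, (D ^ i) ^ 2 ≤ D ^ (2 * n) := by
  induction n with
  | zero => simp
  | succ n ih =>
    rw [Finset.sum_range_succ, mul_add, ← pow_mul, mul_comm n 2]
    have h1 : D ^ (2 * (n + 1)) = D ^ (2 * n) * D ^ 2 := by rw [← pow_add]; ring_nf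
    have h2 : 0 < D ^ (2 * n) := by positivity
    have h3 : 1 + D ≤ D ^ 2 := by nlinarith
    nlinarith [mul_le_mul_of_nonneg_left h3 h2.le]

theorem sum_coeff {D n P : ℕ} (hD : 2 ≤ D) :
    (D : ℝ) ^ (2 * n) ≤ ∑ t ∈ cells (3 * D) n P, coeff D n t ^ 2 ∧
    ∑ t ∈ cells (3 * D) n P, coeff D n t ^ 2 ≤ 10 * (D : ℝ) ^ (2 * n) := by
  have hD' : (2 : ℝ) ≤ D := by exact_mod_cast hD
  have hg := geom_bound hD' n
  rw [sum_cells]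
  simp only [coeff, Finset.sum_const, Finset.card_range, nsmul_eq_mul, neg_sq]
  have e1 : ((D : ℝ) ^ n) ^ 2 = (D : ℝ) ^ (2 * n) := by rw [← pow_mul, mul_comm]
  have e2 : ((3 * D - 1 : ℕ) : ℝ) = 3 * D - 1 := by
    rw [Nat.cast_sub (by omega)]; push_cast; ring
  simp only [e1, e2, ← add_mul, ← Finset.mul_sum]
  have h0 : 0 ≤ ∑ i ∈ Finset.range n, ((D : ℝ) ^ i) ^ 2 :=
    Finset.sum_nonneg fun i _ => sq_nonneg _
  push_cast
  constructor <;> nlinarith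

theorem card_cells {N n P : ℕ} : (cells N n P).card = n * ((N - 1) + N + N) + 1 + P := by
  rw [Finset.card_eq_sum_ones, sum_cells]
  simp

end Cell

/-- The case `d ≥ 1`. The number `S` is the squared norm of the two-dimensional chain, whose boundary
has squared norm `3`. The `n (d + 1)²` pendant triangles make the number of facets cubic in `d`. -/
theorem main_case {d n : ℕ} (hd : 1 ≤ d) (hn : 1 ≤ n) :
    ∃ (m : ℕ) (B : SComplex (Fin m)) (y : SimpIdx (Fin m) (d + 1) → ℝ) (S : ℝ),
      ((d : ℝ) + 1) ^ (2 * n) ≤ S ∧ S ≤ 10 * ((d : ℝ) + 1) ^ (2 * n) ∧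
      (∀ s ∈ B.faces, s.card ≤ d + 2) ∧ B.supportedOn y ∧
      nface B (d + 1) = (n * (9 * d + 8) + 1 + n * (d + 1) ^ 2) * d ∧
      y ⬝ᵥ y = ((d : ℝ) + 2) * (S / 3) ∧
      (gbdry (Fin m) d *ᵥ y) ⬝ᵥ (gbdry (Fin m) d *ᵥ y) = (d : ℝ) + 2 ∧
      (∀ f : SimpIdx (Fin m) (d + 1) → ℝ, B.supportedOn f →
        gbdry (Fin m) d *ᵥ f = 0 → f = 0) ∧
      B.effRes d ((Real.sqrt ((d : ℝ) + 2))⁻¹ • (gbdry (Fin m) d *ᵥ y)) = S / 3 := by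
  open Cell in
  set N := 3 * (d + 1) with hN
  set P := n * (d + 1) ^ 2 with hP
  -- The vertices of `A` follow those of all other levels.
  set A : Finset (ℕ ×ₗ ℕ) := (Finset.range d).image (vx (n + 2)) with hAdef
  have hA : A.card = d := by
    rw [hAdef, Finset.card_image_of_injective, Finset.card_range]
    intro a b h
    exact (vx_inj.1 h).2
  have hS := sum_coeff (D := d + 1) (n := n) (P := P) (by omega)
  have hq : ∀ j, j < 3 → ∀ k, k < 3 →
      (({vx 0 (qi N j), vx 0 (qi N (j + 1))} : Finset (ℕ ×ₗ ℕ)) =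
        {vx 0 (qi N k), vx 0 (qi N (k + 1))}) → j = k := by
    intro j hj k hk h
    have h1 := h.le
    simp only [Finset.insert_subset_iff, Finset.singleton_subset_iff,
      Finset.mem_insert, Finset.mem_singleton, vx_inj, qi_inj (show 2 ≤ N by omega)] at h1
    omega
  obtain ⟨m, B, y, h1, h2, h3, h4, h5, h6, h7⟩ := core_join d A hA hd (cells N n P)
    (u N n) (v N n) (w N n) (p N n) (q N n) (rk N n) (coeff ((d + 1 : ℕ) : ℝ) n)
    (vertices_ne (by omega)) (by
      intro t ht a ha
      obtain ⟨k, _, rfl⟩ := Finset.mem_image.1 ha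
      exact lt_top t ht)
    (fun t _ => free_subset t) (rank_lt (by omega) hn) (fun j => vx 0 (qi N j))
    (by
      intro j hj
      rw [ne_eq, vx_inj, qi_inj (by omega)]
      omega)
    hq
    (by
      intro j hj
      interval_cases j
      · exact ⟨outer 0 (N - 1), by rw [outer_mem]; omega, by
          have e1 : wi N (N - 1) = N - 1 := if_neg (by omega)
          have e2 : wi N (N - 1 + 1) = 0 := if_pos (by omega)
          simp [u, v, w, e1, e2, qi, Finset.insert_subset_iff]⟩
      · exact ⟨fan 0 0, by rw [fan_mem]; omega, by
          have e1 : wi N 0 = 0 := by simp [wi]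
          simp [u, v, w, e1, qi, Finset.insert_subset_iff]⟩
      · exact ⟨fan 0 (N - 2), by rw [fan_mem]; omega, by
          have e1 : wi N (N - 2 + 1) = N - 1 := by unfold wi; split_ifs <;> omega
          simp [u, v, w, e1, qi, Finset.insert_subset_iff]⟩)
    (sum_bdry (edge A) (fun x y h => edge_symm A h) hN (by omega) n P)
  refine ⟨m, B, y, _, ?_, ?_, h1, h2, ?_, h4, h5, h6, h7⟩
  · exact_mod_cast hS.1
  · exact_mod_cast hS.2
  · rw [h3, card_cells]
    congr 3
    congr 1
    omega

/-- For `d = 0` a star with `n` edges suffices. -/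
theorem graph_case {n : ℕ} (hn : 1 ≤ n) :
    ∃ (m : ℕ) (B : SComplex (Fin m)) (y : SimpIdx (Fin m) (0 + 1) → ℝ),
      (∀ s ∈ B.faces, s.card ≤ 0 + 2) ∧ B.supportedOn y ∧
      nface B (0 + 1) = n ∧
      y ⬝ᵥ y = (((0 : ℕ) : ℝ) + 2) * (1 / 2) ∧
      (gbdry (Fin m) 0 *ᵥ y) ⬝ᵥ (gbdry (Fin m) 0 *ᵥ y) = ((0 : ℕ) : ℝ) + 2 ∧
      (∀ f : SimpIdx (Fin m) (0 + 1) → ℝ, B.supportedOn f →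
        gbdry (Fin m) 0 *ᵥ f = 0 → f = 0) ∧
      B.effRes 0 ((Real.sqrt (((0 : ℕ) : ℝ) + 2))⁻¹ • (gbdry (Fin m) 0 *ᵥ y)) = 1 / 2 := by
  have := core (W := ℕ) (ι := ℕ) (κ := ℕ) (R := ℕ) 0 (Finset.range n) (fun k => {0, k + 1})
    (fun k => {k + 1}) (fun _ => 0) (fun k => if k = 0 then 1 else 0)
    (fun k _ => Finset.card_pair (by omega)) (fun k _ => Finset.card_singleton _)
    (fun k _ => by simp) (fun k _ k' _ h => Or.inl (by
      have := h (Finset.mem_singleton_self _)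
      simp at this
      exact this.symm))
    (Finset.range 2) (fun j => {j}) (fun j => if j = 0 then -1 else 1)
    (fun k _ => Finset.card_singleton _)
    (fun j hj => ⟨0, Finset.mem_range.2 hn, by
      have := Finset.mem_range.1 hj
      interval_cases j <;> simp⟩)
    (fun j _ k _ h => by simpa using h)
    (by
      intro ρ
      rw [Finset.sum_eq_single_of_mem 0 (Finset.mem_range.2 hn) (by intro b _ hb; simp [hb])]
      have e0 : ({0, 1} : Finset ℕ).erase 0 = {1} := by decide
      have e1 : ({0, 1} : Finset ℕ).erase 1 = {0} := by decide
      have f0 : ({0, 1} : Finset ℕ).filter (· < 0) = ∅ := by decide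
      have f1 : ({0, 1} : Finset ℕ).filter (· < 1) = {0} := by decide
      rw [inc_eq_sum, Finset.sum_range_succ, Finset.sum_range_one, zero_add,
        Finset.sum_pair (by norm_num), e0, e1, f0, f1]
      simp
      ring)
    (by norm_num [Finset.sum_range_succ])
  have hc : ∑ k ∈ Finset.range n, (if k = 0 then (1 : ℝ) else 0) ^ 2 = 1 := by
    rw [Finset.sum_eq_single_of_mem 0 (Finset.mem_range.2 hn) (by intro b _ hb; simp [hb])]
    simp
  have hb : ∑ j ∈ Finset.range 2, (if j = 0 then (-1 : ℝ) else 1) ^ 2 = 2 := by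
    norm_num [Finset.sum_range_succ]
  rw [hc, hb, Finset.card_range] at this
  exact this

/-! ### Estimates on the constants -/

/-- **Cycles of exponentially-large effective resistance.** (Indices shifted so that
the paper's dimension `d ≥ 1` is `d + 1` here.) There are universal constants such
that for all `d` and all `n ≥ 1` there is a `(d+1)`-dimensional simplicial complex
`B` with `Θ((d+2)³ n)` top-dimensional simplices containing a `(d+1)`-chain `y` with
`‖y‖² = Ω((d+1)^{2n} (d+2))` and `‖∂y‖² = d + 2`, such that `ker ∂[B] = 0`; hence
the unit cycle `γ = ∂y / ‖∂y‖` has effective resistance `R_γ(B) = Θ((d+1)^{2n})`. -/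
theorem exists_complex_with_exponential_effective_resistance :
    ∃ a b c₁ c₂ c₃ : ℝ, 0 < a ∧ 0 < b ∧ 0 < c₁ ∧ 0 < c₂ ∧ 0 < c₃ ∧
      ∀ d n : ℕ, 1 ≤ n →
        ∃ (m : ℕ) (B : SComplex (Fin m)) (y : SimpIdx (Fin m) (d + 1) → ℝ),
          (∀ s ∈ B.faces, s.card ≤ d + 2) ∧ B.supportedOn y ∧
          a * ((d : ℝ) + 2) ^ 3 * (n : ℝ) ≤ ((nface B (d + 1) : ℕ) : ℝ) ∧
          ((nface B (d + 1) : ℕ) : ℝ) ≤ b * ((d : ℝ) + 2) ^ 3 * (n : ℝ) ∧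
          c₁ * ((d : ℝ) + 1) ^ (2 * n) * ((d : ℝ) + 2) ≤ y ⬝ᵥ y ∧
          (gbdry (Fin m) d *ᵥ y) ⬝ᵥ (gbdry (Fin m) d *ᵥ y) = (d : ℝ) + 2 ∧
          (∀ f : SimpIdx (Fin m) (d + 1) → ℝ, B.supportedOn f →
            gbdry (Fin m) d *ᵥ f = 0 → f = 0) ∧
          c₂ * ((d : ℝ) + 1) ^ (2 * n) ≤
            B.effRes d ((Real.sqrt ((d : ℝ) + 2))⁻¹ • (gbdry (Fin m) d *ᵥ y)) ∧
          B.effRes d ((Real.sqrt ((d : ℝ) + 2))⁻¹ • (gbdry (Fin m) d *ᵥ y)) ≤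
            c₃ * ((d : ℝ) + 1) ^ (2 * n) := by
  refine ⟨1 / 8, 10, 1 / 3, 1 / 3, 10 / 3, by norm_num, by norm_num, by norm_num, by norm_num,
    by norm_num, ?_⟩
  intro d n hn
  have hn' : (1 : ℝ) ≤ n := by exact_mod_cast hn
  rcases Nat.eq_zero_or_pos d with rfl | hd
  · obtain ⟨m, B, y, h1, h2, h3, h4, h5, h6, h7⟩ := graph_case hn
    refine ⟨m, B, y, h1, h2, ?_, ?_, ?_, h5, h6, ?_, ?_⟩
    · rw [h3]; norm_num
    · rw [h3]; norm_num; linarith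
    · rw [h4]; norm_num
    · rw [h7]; norm_num
    · rw [h7]; norm_num
  · obtain ⟨m, B, y, S, hS1, hS2, h1, h2, h3, h4, h5, h6, h7⟩ := main_case hd hn
    have hd' : (1 : ℝ) ≤ d := by exact_mod_cast hd
    refine ⟨m, B, y, h1, h2, ?_, ?_, ?_, h5, h6, ?_, ?_⟩
    · rw [h3]
      push_cast
      have : 1 / 8 * ((d : ℝ) + 2) ^ 3 ≤ (9 * d + 8 + (d + 1) ^ 2) * d := by
        nlinarith [sq_nonneg ((d : ℝ) - 1), mul_nonneg (sub_nonneg.2 hd') (sq_nonneg (d : ℝ))]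
      nlinarith
    · rw [h3]
      push_cast
      have : ((9 * d + 8 + (d + 1) ^ 2) * d + d : ℝ) ≤ 10 * ((d : ℝ) + 2) ^ 3 := by
        have : (0 : ℝ) ≤ (d : ℝ) ^ 3 := by positivity
        nlinarith
      nlinarith
    · rw [h4]
      nlinarith
    · rw [h7]; linarith
    · rw [h7]; linarith
end
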